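/- arXiv:2009.04827 — 5 statements merged into one kernel-verified Lean document; each statement's English description precedes it below -/
import Mathlib

section
/- For every n ≥ 3, the first 2n+1 bits of db(n) are 0^n 1 0^{n−2} 1 1; that is, db(n)[0..2n] = 0^n · 1 · 0^{n−2} · 1 · 1. -/
/-- `occ w x`: the number of indices `i` with `x[i..i+|w|-1] = w`,
i.e. the number of occurrences of `w` as a substring of `x`. -/
def occ (w x : List Bool) : ℕ :=
  ((List.range (x.length + 1 - w.length)).filter
    (fun i => decide ((x.drop i).take w.length = w))).length

/-- `occB w x`: the number of occurrences of `w` as a substring of `x`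
starting at a position divisible by `|w|` (aligned block occurrences). -/
def occB (w x : List Bool) : ℕ :=
  ((List.range (x.length + 1 - w.length)).filter
    (fun i => decide (i % w.length = 0) && decide ((x.drop i).take w.length = w))).length

/-- `x` is a de Bruijn string of order `n`: it has length `2^n` and every binary
string of length `n` occurs exactly once as a substring of `x ++ x[0..n-2]`. -/
def IsDeBruijn (n : ℕ) (x : List Bool) : Prop :=
  x.length = 2 ^ n ∧ ∀ w : List Bool, w.length = n → occ w (x ++ x.take (n - 1)) = 1

open Classical in
/-- `db n` is the lexicographically least de Bruijn string of order `n`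
(using the lexicographic order on `List Bool`, with `false < true`);
`[]` if none exists. -/
noncomputable def db (n : ℕ) : List Bool :=
  if h : ∃ x : List Bool, IsDeBruijn n x ∧ ∀ y, IsDeBruijn n y → x ≤ y then h.choose else []

/-- The block `B_{n,i} = db_i(n)^t`: `t` copies of the cyclic left shift of `db n` by `i`. -/
noncomputable def Bblk (n t i : ℕ) : List Bool := (List.replicate t ((db n).rotate i)).flatten

/-- The odd part `t` of `n = 2^s * t`. -/
def oddPart (n : ℕ) : ℕ := n / 2 ^ (n.factorization 2)

/-- `Sblk n` is the string `S_n = B_{n,0} B_{n,1} ⋯ B_{n,2^s-1}` where `n = 2^s * t`, `t` odd. -/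
noncomputable def Sblk (n : ℕ) : List Bool :=
  ((List.range (2 ^ (n.factorization 2))).map (fun i => Bblk n (oddPart n) i)).flatten

/-- `Sfin m = S_1 S_2 ⋯ S_m`. -/
noncomputable def Sfin (m : ℕ) : List Bool := ((List.range m).map (fun k => Sblk (k + 1))).flatten

/-- The infinite sequence `S = S_1 S_2 S_3 ⋯`, as a function giving its `i`-th bit. -/
noncomputable def Sseq (i : ℕ) : Bool := (Sfin (i + 1)).getD i false

/-- For odd `n`, `S_n = db(n)^n`. -/
noncomputable def Sodd (n : ℕ) : List Bool := (List.replicate n (db n)).flatten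

section Greedy
open Finset

def WInj (f : ℕ → Bool) (n m : ℕ) : Prop :=
  ∀ i < m, ∀ j < m, (∀ t < n, f (i+t) = f (j+t)) → i = j
def Pref (f : ℕ → Bool) (k m : ℕ) : Prop :=
  ∀ i < m, f (i+k) = true → ∃ j < m, (∀ t < k, f (j+t) = f (i+t)) ∧ f (j+k) = false

def hit (f : ℕ → Bool) (k : ℕ) (u : ℕ → Bool) (i : ℕ) : Prop := ∀ t < k, f (i+t) = u t

instance (f : ℕ → Bool) (k : ℕ) (u : ℕ → Bool) : DecidablePred (hit f k u) :=
  fun i => by unfold hit; infer_instance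

lemma balance (f : ℕ → Bool) (k m : ℕ) (u : ℕ → Bool) :
    #{i ∈ range m | hit f k u i} + (if hit f k u m then 1 else 0)
      = #{i ∈ range m | hit f k u (i+1)} + (if hit f k u 0 then 1 else 0) := by
  rw [card_filter, card_filter, ← sum_range_succ, ← sum_range_succ' (fun i => if hit f k u i then 1 else 0)]

lemma out_le {f : ℕ → Bool} {k m : ℕ} (h : WInj f (k+1) m) (u : ℕ → Bool) :
    #{i ∈ range m | hit f k u i} ≤ 2 := by
  have : #{i ∈ range m | hit f k u i} ≤ #(univ : Finset Bool) := by
    apply card_le_card_of_injOn (fun i => f (i+k)) (fun _ _ => by simp)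
    intro i hi j hj hij
    simp at hi hj hij
    refine h i hi.1 j hj.1 fun t ht => ?_
    rcases Nat.lt_succ_iff_lt_or_eq.1 ht with h1 | rfl
    · rw [hi.2 t h1, hj.2 t h1]
    · exact hij
  simpa using this

lemma in_inj {f : ℕ → Bool} {k m : ℕ} (h : WInj f (k+1) m) (u : ℕ → Bool) :
    Set.InjOn f ({i ∈ range m | hit f k u (i+1)} : Finset ℕ) := by
  intro i hi j hj hij
  simp at hi hj hij
  refine h i hi.1 j hj.1 fun t ht => ?_
  rcases t with _ | t
  · exact hij
  · have h1 := hi.2 t (by omega)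
    have h2 := hj.2 t (by omega)
    rw [show i + (t+1) = i + 1 + t by ring, show j + (t+1) = j + 1 + t by ring, h1, h2]

lemma in_le {f : ℕ → Bool} {k m : ℕ} (h : WInj f (k+1) m) (u : ℕ → Bool) :
    #{i ∈ range m | hit f k u (i+1)} ≤ 2 := by
  have : #{i ∈ range m | hit f k u (i+1)} ≤ #(univ : Finset Bool) :=
    card_le_card_of_injOn f (fun _ _ => by simp) (in_inj h u)
  simpa using this

lemma two_le_out {f : ℕ → Bool} {k m : ℕ} {u : ℕ → Bool} {i j : ℕ} (hi : i < m) (hj : j < m)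
    (h1 : hit f k u i) (h2 : hit f k u j) (hne : f (i+k) ≠ f (j+k)) :
    2 ≤ #{i ∈ range m | hit f k u i} := by
  have : ({i, j} : Finset ℕ) ⊆ {i ∈ range m | hit f k u i} := by
    intro a ha
    simp at ha
    rcases ha with rfl | rfl <;> simp [*]
  have h3 := card_le_card this
  rwa [card_pair (by rintro rfl; exact hne rfl)] at h3

/-- all words are hit once the greedy trail is stuck -/
lemma stuck_full {f : ℕ → Bool} {k m : ℕ} (hI : WInj f (k+1) m) (hP : Pref f k m)
    (h0 : ∀ t < k, f t = true)
    (hF : ∃ j < m, (∀ t < k, f (j+t) = f (m+t)) ∧ f (j+k) = false)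
    (hT : ∃ j < m, (∀ t < k, f (j+t) = f (m+t)) ∧ f (j+k) = true) :
    (∀ t < k, f (m+t) = f t) ∧ ∀ w : ℕ → Bool, ∃ i < m, ∀ t < k+1, f (i+t) = w t := by
  obtain ⟨a, ha, ha1, ha2⟩ := hF
  obtain ⟨b, hb, hb1, hb2⟩ := hT
  have hm : hit f k (fun t => f (m+t)) m := fun t _ => rfl
  have h2 := two_le_out (f := f) (k := k) (u := fun t => f (m+t)) ha hb ha1 hb1 (by simp [ha2, hb2])
  have hbal := balance f k m (fun t => f (m+t))
  have hin := in_le hI (fun t => f (m+t))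
  rw [if_pos hm] at hbal
  have hz : hit f k (fun t => f (m+t)) 0 := by
    by_contra hc
    rw [if_neg hc] at hbal
    omega
  have hcyc : ∀ t < k, f (m+t) = f t := fun t ht => by
    have := hz t ht
    simpa using this.symm
  refine ⟨hcyc, ?_⟩
  have bal' : ∀ u, #{i ∈ range m | hit f k u i} = #{i ∈ range m | hit f k u (i+1)} := by
    intro u
    have hb := balance f k m u
    have : hit f k u m ↔ hit f k u 0 := by
      unfold hit
      constructor
      · intro h t ht; rw [← h t ht, hcyc t ht]; simp
      · intro h t ht; rw [← h t ht, hcyc t ht]; simp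
    simp only [this] at hb
    omega
  have full : ∀ j, ∀ u : ℕ → Bool, (∀ t, j ≤ t → u t = true) →
      2 ≤ #{i ∈ range m | hit f k u i} := by
    intro j
    induction j with
    | zero =>
      intro u hu
      refine two_le_out ha hb ?_ ?_ (by simp [ha2, hb2])
      · intro t ht; rw [ha1 t ht, hcyc t ht, h0 t ht, hu t (by omega)]
      · intro t ht; rw [hb1 t ht, hcyc t ht, h0 t ht, hu t (by omega)]
    | succ j ih =>
      intro u hu
      by_cases hjk : k ≤ j
      · -- the value of u beyond k is irrelevant
        have := ih (fun t => if t < k then u t else true) (by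
          intro t ht; rw [if_neg (by omega)])
        refine this.trans (card_le_card ?_)
        intro i hi
        simp only [mem_filter] at hi ⊢
        refine ⟨hi.1, fun t ht => ?_⟩
        rw [hi.2 t ht]; exact if_pos ht
      have hv := ih (fun t => u (t+1)) (fun t ht => hu _ (by omega))
      rw [bal'] at hv
      have hsurj : ∃ i < m, hit f k (fun t => u (t+1)) (i+1) ∧ f i = u 0 := by
        have hc := card_image_of_injOn (in_inj hI (fun t => u (t+1)))
        have : image f {i ∈ range m | hit f k (fun t => u (t+1)) (i+1)} = univ := by
          rw [← card_eq_iff_eq_univ]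
          have := in_le hI (fun t => u (t+1))
          simp only [Fintype.card_bool]; omega
        have h3 := this ▸ mem_univ (u 0)
        simp only [mem_image, mem_filter, mem_range] at h3
        obtain ⟨i, ⟨h4, h5⟩, h6⟩ := h3
        exact ⟨i, h4, h5, h6⟩
      obtain ⟨i, him, hi1, hi0⟩ := hsurj
      have hi : ∀ t < k+1, f (i+t) = u t := by
        intro t ht
        rcases t with _ | t
        · exact hi0
        · rw [show i + (t+1) = i+1+t by ring]; exact hi1 t (by omega)
      have hl : f (i+k) = true := by rw [hi k (by omega), hu k (by omega)]
      obtain ⟨i', hi'm, h7, h8⟩ := hP i him hl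
      refine two_le_out him hi'm (fun t ht => hi t (by omega)) (fun t ht => ?_) (by simp [hl, h8])
      rw [h7 t ht, hi t (by omega)]
  intro w
  have hw := full k (fun t => if t < k then w t else true) (by
          intro t ht; rw [if_neg (by omega)])
  obtain ⟨i, hi, j, hj, hne⟩ := one_lt_card.1 (show 1 < _ from hw)
  simp only [mem_filter, mem_range] at hi hj
  have key : f (i+k) ≠ f (j+k) := by
    intro he
    refine hne (hI i hi.1 j hj.1 fun t ht => ?_)
    rcases Nat.lt_succ_iff_lt_or_eq.1 ht with h1 | rfl
    · rw [hi.2 t h1, hj.2 t h1]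
    · exact he
  have h9 : f (i+k) = w k ∨ f (j+k) = w k := by
    revert key; cases f (i+k) <;> cases f (j+k) <;> cases w k <;> simp
  rcases h9 with h9 | h9
  · refine ⟨i, hi.1, fun t ht => ?_⟩
    rcases Nat.lt_succ_iff_lt_or_eq.1 ht with h1 | rfl
    · rw [hi.2 t h1]; exact if_pos h1
    · exact h9
  · refine ⟨j, hj.1, fun t ht => ?_⟩
    rcases Nat.lt_succ_iff_lt_or_eq.1 ht with h1 | rfl
    · rw [hj.2 t h1]; exact if_pos h1
    · exact h9

def wmap (f : ℕ → Bool) (n : ℕ) (i : ℕ) : Fin n → Bool := fun t => f (i + t)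

lemma winj_injOn {f : ℕ → Bool} {n m : ℕ} (h : WInj f n m) :
    Set.InjOn (wmap f n) (range m : Finset ℕ) := by
  intro i hi j hj hij
  simp at hi hj
  exact h i hi j hj fun t ht => congrFun hij ⟨t, ht⟩

lemma winj_le {f : ℕ → Bool} {n m : ℕ} (h : WInj f n m) : m ≤ 2^n := by
  have := card_le_card_of_injOn (t := univ) _ (by simp) (winj_injOn h)
  simpa using this

lemma winj_eq {f : ℕ → Bool} {n m : ℕ} (h : WInj f n m)
    (hs : ∀ w : ℕ → Bool, ∃ i < m, ∀ t < n, f (i+t) = w t) : m = 2^n := by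
  apply le_antisymm (winj_le h)
  have : #(univ : Finset (Fin n → Bool)) ≤ #(range m) := by
    apply card_le_card_of_surjOn (wmap f n)
    intro w _
    obtain ⟨i, hi, h⟩ := hs (fun t => if h : t < n then w ⟨t, h⟩ else true)
    refine ⟨i, by simpa using hi, ?_⟩
    funext t
    have := h t t.2
    simpa [wmap] using this
  simpa using this

def f0 (k t : ℕ) : Bool := decide (t < k ∨ t = 2*k+1 ∨ t = 3*k+1 ∨ t = 3*k+2)

lemma f0_inj {k : ℕ} (hk : 2 ≤ k) : WInj (f0 k) (k+1) (2*k+3) := by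
  have main : ∀ i j, i < j → j < 2*k+3 → ¬ (∀ t < k+1, f0 k (i+t) = f0 k (j+t)) := by
    intro i j hij hj h
    simp only [f0, decide_eq_decide] at h
    have a0 := h 0 (by omega)
    have a1 := h 1 (by omega)
    have a2 := h k (by omega)
    have a3 := h (k-1) (by omega)
    rcases lt_or_ge i k with h1 | h1
    · have a4 := h (k-1-i) (by omega)
      rcases lt_or_ge j k with h2 | h2
      · omega
      · omega
    · rcases eq_or_lt_of_le h1 with h2 | h2
      · rcases lt_or_ge j (2*k+2) with h3 | h3
        · have a5 := h (2*k+1-j) (by omega)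
          omega
        · omega
      · have a6 := h (2*k+1-i) (by omega)
        omega
  intro i hi j hj h
  rcases lt_trichotomy i j with h1 | h1 | h1
  · exact absurd h (main i j h1 hj)
  · exact h1
  · exact absurd (fun t ht => (h t ht).symm) (main j i h1 hi)

lemma f0_pref {k : ℕ} (hk : 2 ≤ k) : Pref (f0 k) k (2*k+3) := by
  intro i hi h
  simp only [f0, decide_eq_true_eq] at h
  have : i = k+1 ∨ i = 2*k+1 ∨ i = 2*k+2 := by omega
  rcases this with rfl | rfl | rfl
  · refine ⟨k, by omega, fun t ht => ?_, ?_⟩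
    · simp only [f0, decide_eq_decide]; omega
    · simp only [f0, decide_eq_false_iff_not]; omega
  · refine ⟨k-1, by omega, fun t ht => ?_, ?_⟩
    · simp only [f0, decide_eq_decide]; omega
    · simp only [f0, decide_eq_false_iff_not]; omega
  · refine ⟨k+2, by omega, fun t ht => ?_, ?_⟩
    · simp only [f0, decide_eq_decide]; omega
    · simp only [f0, decide_eq_false_iff_not]; omega

def St (k m : ℕ) : Prop := ∃ f : ℕ → Bool, (∀ t < 3*k+3, f t = f0 k t) ∧ WInj f (k+1) m ∧ Pref f k m

lemma extend {f : ℕ → Bool} {k m : ℕ} (hI : WInj f (k+1) m) (b : Bool)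
   (hn : ¬ ∃ j < m, (∀ t < k, f (j+t) = f (m+t)) ∧ f (j+k) = b) :
   WInj (Function.update f (m+k) b) (k+1) (m+1) := by
  have e : ∀ a, a ≠ m + k → Function.update f (m+k) b a = f a := fun a ha => by
    simp [Function.update, ha]
  have main : ∀ i < m, ∀ j < m+1, (∀ t < k+1, Function.update f (m+k) b (i+t) = Function.update f (m+k) b (j+t)) → i = j := by
    intro i hi j hj h
    rcases Nat.lt_succ_iff_lt_or_eq.1 hj with h1 | rfl
    · refine hI i hi j h1 fun t ht => ?_
      have := h t ht
      rwa [e _ (by omega), e _ (by omega)] at this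
    · exfalso
      refine hn ⟨i, hi, fun t ht => ?_, ?_⟩
      · have := h t (by omega)
        rwa [e _ (by omega), e _ (by omega)] at this
      · have := h k (by omega)
        rwa [e _ (by omega), Function.update_self] at this
  intro i hi j hj h
  rcases Nat.lt_succ_iff_lt_or_eq.1 hi with h1 | rfl
  · exact main i h1 j hj h
  · rcases Nat.lt_succ_iff_lt_or_eq.1 hj with h2 | rfl
    · exact (main j h2 i hi fun t ht => (h t ht).symm).symm
    · rfl

lemma exists_f {k : ℕ} (hk : 2 ≤ k) : ∃ f : ℕ → Bool, (∀ t < 3*k+3, f t = f0 k t) ∧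
    WInj f (k+1) (2^(k+1)) ∧ (∀ t < k, f (2^(k+1)+t) = f t) ∧
    ∀ w : ℕ → Bool, ∃ i < 2^(k+1), ∀ t < k+1, f (i+t) = w t := by
  classical
  have hst0 : St k (2*k+3) := ⟨f0 k, fun _ _ => rfl, f0_inj hk, f0_pref hk⟩
  have hb : ∀ m, St k m → m ≤ 2^(k+1) := fun m ⟨f, _, h, _⟩ => winj_le h
  obtain ⟨hst, hmax⟩ : St k (Nat.findGreatest (St k) (2^(k+1))) ∧
     ¬ St k (Nat.findGreatest (St k) (2^(k+1)) + 1) := by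
    refine ⟨Nat.findGreatest_spec (hb _ hst0) hst0, fun h => ?_⟩
    have := Nat.le_findGreatest (hb _ h) h
    omega
  have hmge : 2*k+3 ≤ Nat.findGreatest (St k) (2^(k+1)) := Nat.le_findGreatest (hb _ hst0) hst0
  generalize Nat.findGreatest (St k) (2^(k+1)) = m at *
  obtain ⟨f, hf0, hI, hP⟩ := hst
  have up : ∀ b a, a ≠ m + k → Function.update f (m+k) b a = f a := fun b a ha => by
    simp [Function.update, ha]
  have hF : ∃ j < m, (∀ t < k, f (j+t) = f (m+t)) ∧ f (j+k) = false := by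
    by_contra hc
    refine hmax ⟨Function.update f (m+k) false, fun t ht => ?_, extend hI false hc, ?_⟩
    · rw [up _ _ (by omega), hf0 t ht]
    · intro i hi h
      rcases Nat.lt_succ_iff_lt_or_eq.1 hi with h1 | rfl
      · rw [up _ _ (by omega)] at h
        obtain ⟨j, hj, h2, h3⟩ := hP i h1 h
        refine ⟨j, by omega, fun t ht => ?_, ?_⟩
        · rw [up _ _ (by omega), up _ _ (by omega), h2 t ht]
        · rw [up _ _ (by omega), h3]
      · simp at h
  have hT : ∃ j < m, (∀ t < k, f (j+t) = f (m+t)) ∧ f (j+k) = true := by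
    by_contra hc
    refine hmax ⟨Function.update f (m+k) true, fun t ht => ?_, extend hI true hc, ?_⟩
    · rw [up _ _ (by omega), hf0 t ht]
    · intro i hi h
      rcases Nat.lt_succ_iff_lt_or_eq.1 hi with h1 | rfl
      · rw [up _ _ (by omega)] at h
        obtain ⟨j, hj, h2, h3⟩ := hP i h1 h
        refine ⟨j, by omega, fun t ht => ?_, ?_⟩
        · rw [up _ _ (by omega), up _ _ (by omega), h2 t ht]
        · rw [up _ _ (by omega), h3]
      · obtain ⟨j, hj, h2, h3⟩ := hF
        refine ⟨j, by omega, fun t ht => ?_, ?_⟩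
        · rw [up _ _ (by omega), up _ _ (by omega), h2 t ht]
        · rw [up _ _ (by omega), h3]
  have h0 : ∀ t < k, f t = true := fun t ht => by
    rw [hf0 t (by omega)]; simp [f0, ht]
  obtain ⟨h1, h2⟩ := stuck_full hI hP h0 hF hT
  have hm := winj_eq hI h2
  subst hm
  exact ⟨f, hf0, hI, h1, h2⟩

end Greedy

lemma pow_ge {k : ℕ} (hk : 2 ≤ k) : 2*k+4 ≤ 2^(k+1) := by
  induction k, hk using Nat.le_induction with
  | base => norm_num
  | succ k hk ih => rw [pow_succ]; omega

lemma window_iff (x w : List Bool) (i n : ℕ) (hw : w.length = n) :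
    (x.drop i).take n = w ↔ ∀ t < n, x[i+t]? = w[t]? := by
  constructor
  · rintro rfl t ht
    simp [List.getElem?_take, ht]
  · intro h
    apply List.ext_getElem?
    intro t
    by_cases ht : t < n
    · simp [List.getElem?_take, ht, h t ht]
    · rw [List.getElem?_eq_none (by simp; omega), List.getElem?_eq_none (by omega)]

lemma occ_eq_card (w x : List Bool) :
    occ w x = ((Finset.range (x.length + 1 - w.length)).filter
      (fun i => (x.drop i).take w.length = w)).card := by
  rfl

lemma exists_debruijn {k : ℕ} (hk : 2 ≤ k) : ∃ x, IsDeBruijn (k+1) x ∧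
    ∀ j < 2*k+3, x[j]? = some (f0 k (j+k)) := by
  obtain ⟨f, hf0, hI, hc, hs⟩ := exists_f hk
  have hN := pow_ge hk
  generalize hNN : 2^(k+1) = N at *
  have hF : ∀ t, t < N + k → f (t % N) = f t := by
    intro t ht
    rcases lt_or_ge t N with h | h
    · rw [Nat.mod_eq_of_lt h]
    · obtain ⟨s, rfl⟩ := Nat.exists_eq_add_of_le h
      rw [Nat.add_mod_left, Nat.mod_eq_of_lt (by omega), hc s (by omega)]
  have hF2 : ∀ a t, t < k+1 → f ((a + t) % N) = f (a % N + t) := by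
    intro a t ht
    have := Nat.mod_lt a (show 0 < N by omega)
    rw [← hF (a % N + t) (by omega), Nat.mod_add_mod]
  let x := (List.range N).map (fun j => f ((j+k) % N))
  have hx : x ++ x.take k = (List.range (N+k)).map (fun j => f ((j+k) % N)) := by
    rw [List.range_add, List.map_append]
    congr 1
    simp only [x, ← List.map_take, List.take_range, List.map_map]
    rw [min_eq_left (by omega)]
    apply List.map_congr_left
    intro j _
    simp [add_assoc]
  refine ⟨x, ⟨by simp [x, hNN], ?_⟩, ?_⟩
  · intro w hw
    rw [Nat.add_sub_cancel, hx, occ_eq_card, Finset.card_eq_one]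
    obtain ⟨i, hi, h⟩ := hs (fun t => w.getD t false)
    have key : ∀ j, j < N → ((((List.range (N+k)).map (fun j => f ((j+k) % N))).drop j).take w.length = w
        ↔ (j + k) % N = i) := by
      intro j hj
      rw [hw, window_iff _ _ _ _ hw]
      have e : ∀ t < k+1, ((List.range (N+k)).map (fun j => f ((j+k) % N)))[j+t]? = some (f ((j+k) % N + t)) := by
        intro t ht
        rw [List.getElem?_map, List.getElem?_range (by omega), Option.map_some, ← hF2 _ _ ht]
        congr 3
        ring
      have e2 : ∀ t < k+1, w[t]? = some (f (i+t)) := by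
        intro t ht
        rw [h t ht, List.getD_eq_getElem?_getD, List.getElem?_eq_getElem (by omega)]
        simp
      constructor
      · intro h'
        refine hI _ (Nat.mod_lt _ (by omega)) _ hi fun t ht => ?_
        have := h' t ht
        rw [e t ht, e2 t ht] at this
        exact Option.some.inj this
      · rintro rfl t ht
        rw [e t ht, e2 t ht]
    refine ⟨(i + N - k) % N, ?_⟩
    have hmod : ((i + N - k) % N + k) % N = i := by
      rw [Nat.mod_add_mod, Nat.sub_add_cancel (by omega), Nat.add_mod_right, Nat.mod_eq_of_lt hi]
    have hlt : (i + N - k) % N < N := Nat.mod_lt _ (by omega)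
    ext j
    simp only [Finset.mem_filter, Finset.mem_range, Finset.mem_singleton, List.length_map,
      List.length_range]
    rw [hw, show N + k + 1 - (k+1) = N by omega, ← hw]
    constructor
    · rintro ⟨h1, h2⟩
      rw [key j h1] at h2
      have h3 : (j + k) ≡ ((i + N - k) % N + k) [MOD N] := by
        unfold Nat.ModEq; rw [hmod, h2]
      exact (Nat.ModEq.add_right_cancel' k h3).eq_of_lt_of_lt h1 hlt
    · rintro rfl
      exact ⟨hlt, (key _ hlt).2 hmod⟩
  · intro j hj
    simp only [x]
    rw [List.getElem?_map, List.getElem?_range (by omega), Option.map_some, hF _ (by omega), hf0 _ (by omega)]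

lemma debruijn_inj {n : ℕ} {x : List Bool} (h : IsDeBruijn n x) {a b : ℕ}
    (ha : a + n ≤ x.length) (hb : b + n ≤ x.length)
    (he : ∀ t < n, x.getD (a+t) false = x.getD (b+t) false) : a = b := by
  obtain ⟨hl, h⟩ := h
  have hw : ((x.drop a).take n).length = n := by simp; omega
  have h1 := h _ hw
  rw [occ_eq_card, Finset.card_eq_one] at h1
  obtain ⟨c, hc⟩ := h1
  have mem : ∀ d, d + n ≤ x.length → (∀ t < n, x.getD (a+t) false = x.getD (d+t) false) → d = c := by
    intro d hd he
    rw [← Finset.mem_singleton, ← hc, Finset.mem_filter, Finset.mem_range, hw]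
    refine ⟨by simp; omega, ?_⟩
    rw [window_iff _ _ _ _ hw]
    intro t ht
    have := he t ht
    rw [List.getElem?_append_left (by omega), List.getElem?_take, if_pos ht, List.getElem?_drop,
      List.getElem?_eq_getElem (by omega), List.getElem?_eq_getElem (by omega)]
    rw [List.getD_eq_getElem _ _ (by omega), List.getD_eq_getElem _ _ (by omega)] at this
    rw [this]
  rw [mem a ha (fun _ _ => rfl), mem b hb he]

lemma prefix_of_le {k : ℕ} (hk : 2 ≤ k) {x y : List Bool} (hx : IsDeBruijn (k+1) x)
    (hyl : y.length = 2^(k+1)) (hy : ∀ j < 2*k+3, y[j]? = some (f0 k (j+k))) (hxy : x ≤ y) :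
    x.take (2*k+3) = y.take (2*k+3) := by
  have hN := pow_ge hk
  have hxl := hx.1
  rcases List.le_iff_exists.1 (show @LE.le (List Bool) List.instLE x y from not_lt_of_ge hxy) with h | ⟨i, h1, h2, h3, h4⟩
  · rw [hxl, ← hyl, List.take_length] at h
    rw [h]
  rcases lt_or_ge i (2*k+3) with hi | hi
  · exfalso
    have X1 : ∀ j < i, x.getD j false = f0 k (j+k) := by
      intro j hj
      have := hy j (by omega)
      rw [List.getElem?_eq_getElem (by omega), ← h3 j hj] at this
      rw [List.getD_eq_getElem _ _ (by omega)]
      exact Option.some.inj this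
    have h5 := hy i hi
    rw [List.getElem?_eq_getElem h2] at h5
    have h6 := Option.some.inj h5
    have h7 : x[i] = false ∧ y[i] = true := by
      revert h4; cases x[i] <;> cases y[i] <;> simp
    have X2 : x.getD i false = false := by
      rw [List.getD_eq_getElem _ _ (by omega)]; exact h7.1
    rw [h7.2] at h6
    have h8 : i = k+1 ∨ i = 2*k+1 ∨ i = 2*k+2 := by
      have := h6.symm
      simp only [f0, decide_eq_true_eq] at this
      omega
    have Xf : ∀ j < i, j ≠ k+1 → j ≠ 2*k+1 → j ≠ 2*k+2 → x.getD j false = false := by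
      intro j hj _ _ _
      rw [X1 j hj]; simp only [f0, decide_eq_false_iff_not]; omega
    have Xt : ∀ j < i, j = k+1 ∨ j = 2*k+1 → x.getD j false = true := by
      intro j hj _
      rw [X1 j hj]; simp only [f0, decide_eq_true_eq]; omega
    rcases h8 with rfl | rfl | rfl
    · have := debruijn_inj hx (a := 0) (b := 1) (by omega) (by omega) (by
        intro t ht
        rw [Xf (0+t) (by omega) (by omega) (by omega) (by omega)]
        by_cases h : t = k
        · rw [h, add_comm, X2]
        · rw [Xf (1+t) (by omega) (by omega) (by omega) (by omega)])
      omega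
    · cases hv : x.getD (2*k+2) false
      · have := debruijn_inj hx (a := 0) (b := k+2) (by omega) (by omega) (by
          intro t ht
          rw [Xf (0+t) (by omega) (by omega) (by omega) (by omega)]
          by_cases h : t = k
          · rw [show k+2+t = 2*k+2 by omega, hv]
          · by_cases h' : t = k-1
            · rw [show k+2+t = 2*k+1 by omega, X2]
            · rw [Xf (k+2+t) (by omega) (by omega) (by omega) (by omega)])
        omega
      · have := debruijn_inj hx (a := 1) (b := k+2) (by omega) (by omega) (by
          intro t ht
          by_cases h : t = k
          · rw [show k+2+t = 2*k+2 by omega, hv, Xt _ (by omega) (by omega)]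
          · rw [Xf (1+t) (by omega) (by omega) (by omega) (by omega)]
            by_cases h' : t = k-1
            · rw [show k+2+t = 2*k+1 by omega, X2]
            · rw [Xf (k+2+t) (by omega) (by omega) (by omega) (by omega)])
        omega
    · have := debruijn_inj hx (a := 2) (b := k+2) (by omega) (by omega) (by
          intro t ht
          by_cases h : t = k
          · rw [show k+2+t = 2*k+2 by omega, X2, Xf _ (by omega) (by omega) (by omega) (by omega)]
          · by_cases h' : t = k-1
            · rw [Xt _ (by omega) (by omega), Xt _ (by omega) (by omega)]
            · rw [Xf (2+t) (by omega) (by omega) (by omega) (by omega),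
                Xf (k+2+t) (by omega) (by omega) (by omega) (by omega)])
      omega
  · apply List.ext_getElem
    · simp [hxl, hyl]
    · intro j hj1 hj2
      simp at hj1
      simp only [List.getElem_take]
      exact h3 j (by omega)

lemma db_spec {n : ℕ} (h : ∃ x, IsDeBruijn n x) :
    IsDeBruijn n (db n) ∧ ∀ y, IsDeBruijn n y → db n ≤ y := by
  have h' : ∃ x : List Bool, IsDeBruijn n x ∧ ∀ y, IsDeBruijn n y → x ≤ y := by
    have hfin : {x | IsDeBruijn n x}.Finite :=
      (List.finite_length_eq Bool (2^n)).subset fun x hx => hx.1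
    obtain ⟨x, hx, hm⟩ := Set.exists_min_image _ id hfin h
    exact ⟨x, hx, hm⟩
  unfold db
  rw [dif_pos h']
  exact h'.choose_spec

/-- For every `n ≥ 3`, `db(n)[0..2n] = 0^n · 1 · 0^{n-2} · 1 · 1`. -/
theorem stmt1 (n : ℕ) (hn : 3 ≤ n) :
    (db n).take (2 * n + 1) =
      List.replicate n false ++ [true] ++ List.replicate (n - 2) false ++ [true, true] := by
  obtain ⟨k, rfl⟩ : ∃ k, n = k + 1 := ⟨n - 1, by omega⟩
  have hk : 2 ≤ k := by omega
  have hN := pow_ge hk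
  obtain ⟨y, hy, hp⟩ := exists_debruijn hk
  obtain ⟨h1, h2⟩ := db_spec ⟨y, hy⟩
  rw [show 2 * (k+1) + 1 = 2*k+3 by ring, prefix_of_le hk h1 hy.1 hp (h2 y hy)]
  have hyl := hy.1
  apply List.ext_getElem?
  intro j
  by_cases hj : j < 2*k+3
  · rw [List.getElem?_take, if_pos hj, hp j hj]
    simp only [List.getElem?_append, List.getElem?_replicate, List.length_append,
      List.length_replicate, List.length_cons, List.length_nil, f0]
    rcases lt_or_ge j (k+1) with c1 | c1
    · rw [if_pos (by omega), if_pos (by omega), if_pos c1, if_pos c1]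
      simp; omega
    · rcases eq_or_lt_of_le c1 with c2 | c2
      · subst c2
        rw [if_pos (by omega), if_pos (by omega), if_neg (by omega), Nat.sub_self]
        simp; omega
      · rcases lt_or_ge j (2*k+1) with c3 | c3
        · rw [if_pos (by omega), if_neg (by omega), if_pos (by omega)]
          simp; omega
        · rw [if_neg (by omega)]
          rcases (show j = 2*k+1 ∨ j = 2*k+2 by omega) with rfl | rfl
          · rw [show 2*k+1 - (k+1+(0+1)+(k+1-2)) = 0 by omega]; simp; omega
          · rw [show 2*k+2 - (k+1+(0+1)+(k+1-2)) = 1 by omega]; simp; omega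
  · rw [List.getElem?_eq_none (by simp; omega), List.getElem?_eq_none (by simp; omega)]
end

section
/- For every n ≥ 3, the last n bits of db(n) are all 1s; that is, db(n)[2^n−n .. 2^n−1] = 1^n. -/
/-- Abstract greedy walk. -/
structure Gr (m : ℕ) (V e : ℕ → ℕ) : Prop where
  h0 : V 0 = 2 ^ m - 1
  hs : ∀ j, V (j + 1) = (2 * V j + e j) % 2 ^ m
  he1 : ∀ j j', j' < j → V j' = V j → e j = 1
  he0 : ∀ j, e j = 0 ∨ (e j = 1 ∧ ∃ j' < j, V j' = V j)

namespace Gr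
variable {m : ℕ} {V e : ℕ → ℕ}

lemma Mpos (m : ℕ) : 0 < 2 ^ m := by positivity

lemma Vlt (h : Gr m V e) (j : ℕ) : V j < 2 ^ m := by
  have := Mpos m
  cases j with
  | zero => rw [h.h0]; omega
  | succ j => rw [h.hs]; exact Nat.mod_lt _ this

lemma Elt (h : Gr m V e) (j : ℕ) : 2 * V j + e j < 2 * 2 ^ m := by
  have := h.Vlt j
  rcases h.he0 j with h1 | h1 <;> omega

lemma firstVisit (h : Gr m V e) (j : ℕ) : ∃ j' ≤ j, V j' = V j ∧ e j' = 0 := by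
  induction j using Nat.strong_induction_on with
  | _ j ih =>
    rcases h.he0 j with h1 | ⟨_, j', hj', hv⟩
    · exact ⟨j, le_rfl, rfl, h1⟩
    · obtain ⟨a, ha, hb, hc⟩ := ih j' hj'
      exact ⟨a, by omega, by omega, hc⟩

/-- two distinct values with same residue cover everything -/
lemma cover {M x y u v : ℕ} (hx : x < 2 * M) (hy : y < 2 * M) (hu : u < 2 * M) (hxy : x ≠ y)
    (h1 : x % M = v) (h2 : y % M = v) (h3 : u % M = v) : u = x ∨ u = y := by
  have key : ∀ z, z < 2 * M → z % M = v → z = v ∨ z = v + M := by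
    intro z hz hzv
    by_cases hzM : z < M
    · rw [Nat.mod_eq_of_lt hzM] at hzv; omega
    · rw [Nat.mod_eq_sub_mod (by omega), Nat.mod_eq_of_lt (by omega)] at hzv; omega
  have := key x hx h1
  have := key y hy h2
  have := key u hu h3
  omega

def Inj (V e : ℕ → ℕ) (T : ℕ) : Prop :=
  ∀ a b, a < T → b < T → 2 * V a + e a = 2 * V b + e b → a = b

lemma exists_T (h : Gr m V e) : ∃ T, Inj V e T ∧ ∃ j < T, 2 * V j + e j = 2 * V T + e T := by
  have hex : ∃ T, ∃ j < T, 2 * V j + e j = 2 * V T + e T := by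
    obtain ⟨a, ha, b, hb, hab, heq⟩ := Finset.exists_ne_map_eq_of_card_lt_of_maps_to
      (s := Finset.range (2 * 2 ^ m + 1)) (t := Finset.range (2 * 2 ^ m))
      (f := fun j => 2 * V j + e j) (by simp) (fun j _ => by simpa using h.Elt j)
    rcases lt_or_gt_of_ne hab with hl | hl
    · exact ⟨b, a, hl, heq⟩
    · exact ⟨a, b, hl, heq.symm⟩
  classical
  refine ⟨Nat.find hex, ?_, Nat.find_spec hex⟩
  intro a b ha hb heq
  by_contra hne
  rcases lt_or_gt_of_ne hne with hl | hl
  · exact Nat.find_min hex hb ⟨a, hl, heq⟩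
  · exact Nat.find_min hex ha ⟨b, hl, heq.symm⟩

lemma elt2 (h : Gr m V e) (j : ℕ) : e j = 0 ∨ e j = 1 := by
  rcases h.he0 j with h1 | h1
  · exact Or.inl h1
  · exact Or.inr h1.1

lemma split (h : Gr m V e) {a b : ℕ} (heq : 2 * V a + e a = 2 * V b + e b) :
    V a = V b ∧ e a = e b := by
  have := h.elt2 a
  have := h.elt2 b
  omega

lemma pre (h : Gr m V e) {j : ℕ} (hj : 0 < j) : (2 * V (j - 1) + e (j - 1)) % 2 ^ m = V j := by
  have := h.hs (j - 1)
  rw [← this]; congr 1; omega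

theorem main1 (h : Gr m V e) : Inj V e (2 * 2 ^ m) ∧ V (2 * 2 ^ m) = 2 ^ m - 1 ∧
    ∀ u < 2 * 2 ^ m, ∃ j < 2 * 2 ^ m, 2 * V j + e j = u := by
  obtain ⟨T, hinj, j, hjT, hj⟩ := h.exists_T
  have hM := Mpos m
  obtain ⟨hVj, hej⟩ := h.split hj
  have heT : e T = 1 := h.he1 T j hjT hVj
  rcases h.he0 j with h0 | ⟨_, j', hj', hV'⟩
  · omega
  have hVT : V T = 2 ^ m - 1 := by
    by_contra hne
    have hj0 : j' ≠ 0 := by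
      rintro rfl
      rw [h.h0] at hV'; omega
    have := cover (h.Elt (j' - 1)) (h.Elt (j - 1)) (h.Elt (T - 1)) (v := V T)
      (fun hh => by have := hinj _ _ (by omega) (by omega) hh; omega)
      (by rw [h.pre (by omega)]; omega) (by rw [h.pre (by omega)]; omega)
      (by rw [h.pre (by omega)])
    rcases this with hh | hh
    · have := hinj _ _ (by omega) (by omega) hh; omega
    · have := hinj _ _ (by omega) (by omega) hh; omega
  have ex : ∀ c ≤ m, ∀ v < 2 ^ m, 2 ^ (m - c) ∣ v + 1 → ∃ j < T, 2 * V j + e j = 2 * v + 1 := by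
    intro c
    induction c with
    | zero =>
      intro _ v hv hd
      have := Nat.le_of_dvd (by omega) hd
      simp only [Nat.sub_zero] at this
      exact ⟨j, hjT, by omega⟩
    | succ c ih =>
      intro hc v hv hd
      have hMM : 2 ^ (m - c) ∣ 2 ^ m := pow_dvd_pow 2 (by omega)
      have hv' : (2 * v + 1) % 2 ^ m < 2 ^ m := Nat.mod_lt _ hM
      have hd2 : 2 ^ (m - c) ∣ (2 * v + 1) % 2 ^ m + 1 := by
        have h1 : 2 ^ (m - c) ∣ 2 * v + 1 + 1 := by
          have : 2 * v + 1 + 1 = 2 * (v + 1) := by ring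
          rw [this, show m - c = (m - (c + 1)) + 1 by omega, pow_succ, mul_comm _ 2]
          exact Nat.mul_dvd_mul_left 2 hd
        have h2 := Nat.div_add_mod (2 * v + 1) (2 ^ m)
        have h3 : 2 * v + 1 + 1 = 2 ^ m * ((2 * v + 1) / 2 ^ m) + ((2 * v + 1) % 2 ^ m + 1) := by
          omega
        rw [h3] at h1
        exact (Nat.dvd_add_right (Dvd.dvd.mul_right hMM _)).1 h1
      obtain ⟨a, haT, ha⟩ := ih (by omega) _ hv' hd2
      have hea : e a = 1 := by have := h.elt2 a; omega
      have hVa : V a = (2 * v + 1) % 2 ^ m := by omega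
      have := h.he0 a
      obtain ⟨a', ha', hVa'⟩ : ∃ j' < a, V j' = V a := by
        rcases h.he0 a with h1 | h1
        · omega
        · exact h1.2
      have key : ∃ x y, 0 < x ∧ x ≤ T ∧ 0 < y ∧ y ≤ T ∧ x ≠ y ∧ V x = V a ∧ V y = V a := by
        by_cases h0 : a' = 0
        · subst h0
          exact ⟨a, T, by omega, by omega, by omega, by omega, by omega, rfl,
            by rw [hVT, ← hVa', h.h0]⟩
        · exact ⟨a', a, by omega, by omega, by omega, by omega, by omega, hVa', rfl⟩
      obtain ⟨x, y, hx, hxT, hy, hyT, hxy, hVx, hVy⟩ := key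
      have := cover (h.Elt (x - 1)) (h.Elt (y - 1)) (u := 2 * v + 1) (v := V a) (by omega)
        (fun hh => by have := hinj _ _ (by omega) (by omega) hh; omega)
        (by rw [h.pre (by omega)]; omega) (by rw [h.pre (by omega)]; omega) hVa.symm
      rcases this with hh | hh
      · exact ⟨x - 1, by omega, hh.symm⟩
      · exact ⟨y - 1, by omega, hh.symm⟩
  have surj : ∀ u < 2 * 2 ^ m, ∃ j < T, 2 * V j + e j = u := by
    intro u hu
    obtain ⟨a, haT, ha⟩ := ex m le_rfl (u / 2) (by omega) (by simp)
    rcases Nat.mod_two_eq_zero_or_one u with h2 | h2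
    · obtain ⟨b, hb, hb1, hb2⟩ := h.firstVisit a
      have := h.elt2 a
      exact ⟨b, by omega, by omega⟩
    · exact ⟨a, haT, by omega⟩
  have hT : T = 2 * 2 ^ m := by
    apply le_antisymm
    · have := Finset.card_le_card_of_injOn (s := Finset.range T) (t := Finset.range (2 * 2 ^ m))
        (fun j => 2 * V j + e j) (fun j _ => by simpa using h.Elt j)
        (fun a ha b hb hab => hinj a b (by simpa using ha) (by simpa using hb) hab)
      simpa using this
    · have := Finset.card_le_card_of_surjOn (s := Finset.range T) (t := Finset.range (2 * 2 ^ m))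
        (fun j => 2 * V j + e j) (fun u hu => by
          obtain ⟨j, hj, hh⟩ := surj u (by simpa using hu)
          exact ⟨j, by simpa using hj, hh⟩)
      simpa using this
  subst hT
  exact ⟨hinj, hVT, surj⟩

/-- last edge is the all ones loop -/
theorem lastEdge (h : Gr m V e) : 2 * V (2 * 2 ^ m - 1) + e (2 * 2 ^ m - 1) = 2 * 2 ^ m - 1 := by
  obtain ⟨hinj, hT, surj⟩ := h.main1
  have hM := Mpos m
  obtain ⟨j, hj, hE⟩ := surj (2 * 2 ^ m - 1) (by omega)
  have := h.elt2 j
  by_cases hlt : j + 1 < 2 * 2 ^ m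
  · exfalso
    have hV : V (j + 1) = 2 ^ m - 1 := by
      rw [h.hs, hE, Nat.mod_eq_sub_mod (by omega), Nat.mod_eq_of_lt (by omega)]; omega
    have := h.he1 (j + 1) j (by omega) (by omega)
    have := hinj j (j + 1) hj hlt (by omega)
    omega
  · have : j = 2 * 2 ^ m - 1 := by omega
    have e1 := congrArg V this
    have e2 := congrArg e this
    omega

theorem startSeg (h : Gr m V e) : ∀ j ≤ m, V j = 2 ^ m - 2 ^ j ∧ e j = 0 := by
  intro j
  induction j using Nat.strong_induction_on with
  | _ j ih =>
    intro hj
    have hV : V j = 2 ^ m - 2 ^ j := by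
      cases j with
      | zero => simpa using h.h0
      | succ j =>
        obtain ⟨h1, h2⟩ := ih j (by omega) (by omega)
        have hle : 2 ^ (j + 1) ≤ 2 ^ m := Nat.pow_le_pow_right (by norm_num) hj
        have : 0 < 2 ^ (j + 1) := by positivity
        rw [h.hs, h1, h2]
        rw [pow_succ] at *
        rw [Nat.mod_eq_sub_mod (by omega), Nat.mod_eq_of_lt (by omega)]; omega
    refine ⟨hV, ?_⟩
    rcases h.he0 j with h1 | ⟨_, j', hj', hV'⟩
    · exact h1
    · exfalso
      have h1 := (ih j' hj' (by omega)).1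
      have hle : 2 ^ j ≤ 2 ^ m := Nat.pow_le_pow_right (by norm_num) hj
      have hlt : 2 ^ j' < 2 ^ j := Nat.pow_lt_pow_right (by norm_num) hj'
      omega

/-- Lemma A -/
lemma pred (h : Gr m V e) {j v u : ℕ} (hj : j + 1 < 2 * 2 ^ m) (hE : 2 * V j + e j = 2 * v + 1)
    (hu : u < 2 * 2 ^ m) (huv : u % 2 ^ m = v) : ∃ j' < j, 2 * V j' + e j' = u := by
  obtain ⟨hinj, -, -⟩ := h.main1
  have hM := Mpos m
  have := h.elt2 j
  have hVj : V j = v := by omega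
  obtain ⟨j0, hj0, hV0⟩ : ∃ j' < j, V j' = V j := by
    rcases h.he0 j with h1 | h1
    · omega
    · exact h1.2
  by_cases hz : j0 = 0
  · exfalso
    subst hz
    rw [h.h0] at hV0
    have hV : V (j + 1) = 2 ^ m - 1 := by
      rw [h.hs, hE, Nat.mod_eq_sub_mod (by omega), Nat.mod_eq_of_lt (by omega)]; omega
    have := h.he1 (j + 1) j (by omega) (by omega)
    have := hinj j (j + 1) (by omega) hj (by omega)
    omega
  · have := cover (h.Elt (j0 - 1)) (h.Elt (j - 1)) hu (v := v)
      (fun hh => by have := hinj _ _ (by omega) (by omega) hh; omega)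
      (by rw [h.pre (by omega)]; omega) (by rw [h.pre (by omega)]; omega) huv
    rcases this with hh | hh
    · exact ⟨j0 - 1, by omega, hh.symm⟩
    · exact ⟨j - 1, by omega, hh.symm⟩

/-- Forward lemma: both in-edges used gives exhausted. -/
lemma succ2 (h : Gr m V e) {a b v : ℕ} (hv : v < 2 ^ m)
    (ha : 2 * V a + e a = v) (hb : 2 * V b + e b = v + 2 ^ m) {t : ℕ}
    (hat : a < t) (hbt : b < t) : ∃ j ≤ t, 2 * V j + e j = 2 * v + 1 := by
  have h1 : V (a + 1) = v := by rw [h.hs, ha, Nat.mod_eq_of_lt hv]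
  have h2 : V (b + 1) = v := by rw [h.hs, hb, Nat.add_mod_right, Nat.mod_eq_of_lt hv]
  have hM := Mpos m
  have hab : a ≠ b := by rintro rfl; omega
  rcases lt_or_gt_of_ne hab with hl | hl
  · exact ⟨b + 1, by omega, by have := h.he1 (b + 1) (a + 1) (by omega) (by omega); omega⟩
  · exact ⟨a + 1, by omega, by have := h.he1 (a + 1) (b + 1) (by omega) (by omega); omega⟩

end Gr

namespace Gr
variable {m : ℕ} {V e : ℕ → ℕ}

lemma iter (h : Gr m V e) (j l : ℕ) : ∃ r < 2 ^ l, V (j + l) = (V j * 2 ^ l + r) % 2 ^ m := by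
  induction l with
  | zero => exact ⟨0, by simp, by simp [Nat.mod_eq_of_lt (h.Vlt j)]⟩
  | succ l ih =>
    obtain ⟨r, hr, hV⟩ := ih
    have := h.elt2 (j + l)
    refine ⟨2 * r + e (j + l), by rw [pow_succ]; omega, ?_⟩
    rw [← add_assoc, h.hs, hV]
    rw [Nat.add_mod, Nat.mul_mod_mod, ← Nat.add_mod]
    congr 1
    ring

lemma mod_double (x b s : ℕ) (hb : b < 2) : (2 * x + b) % 2 ^ (s + 1) = 2 * (x % 2 ^ s) + b := by
  rw [pow_succ, mul_comm (2 ^ s) 2, Nat.mod_mul]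
  have h1 : (2 * x + b) % 2 = b := by omega
  have h2 : (2 * x + b) / 2 = x := by omega
  rw [h1, h2]; ring

lemma mod_half (x s : ℕ) : (x / 2) % 2 ^ s = (x % 2 ^ (s + 1)) / 2 := by
  rw [pow_succ, mul_comm (2 ^ s) 2, Nat.mod_mul_right_div_self]

theorem claim (h : Gr m V e) {k d r : ℕ} (hm : m = d + r + 2) (hk : k < 2 * 2 ^ m)
    (hV : V k = 2 ^ m - 2 ^ d) (he : e k = 1) :
    ∃ j < k, 2 * V j + e j = 2 * (2 ^ m - 2 ^ (d + 1)) + 1 := by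
  have hM := Mpos m
  have hmk : m < k := by
    by_contra hcon
    have := (h.startSeg k (by omega)).2
    omega
  obtain ⟨t, ht⟩ : ∃ t, k = t + 1 + d := ⟨k - 1 - d, by omega⟩
  have hMd : 2 ^ m = 2 ^ d * 2 ^ (r + 2) := by rw [hm]; ring
  have hdpos : 0 < 2 ^ d := by positivity
  have hrpos : 0 < 2 ^ r := by positivity
  -- analysis of the vertex `V t`
  have hVt1 : V (t + 1) % 2 ^ (r + 2) = 2 ^ (r + 2) - 1 := by
    obtain ⟨s, hs, hVs⟩ := h.iter (t + 1) d
    rw [← ht, hV, hMd] at hVs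
    have h1 := congrArg (fun x => x / 2 ^ d) hVs
    rw [Nat.mod_mul_right_div_self] at h1
    have h2 : (V (t + 1) * 2 ^ d + s) / 2 ^ d = V (t + 1) := by
      rw [mul_comm, Nat.mul_add_div hdpos, Nat.div_eq_of_lt hs, add_zero]
    have h3 : (2 ^ d * 2 ^ (r + 2) - 2 ^ d) / 2 ^ d = 2 ^ (r + 2) - 1 := by
      rw [← Nat.mul_sub_one, Nat.mul_div_cancel_left _ hdpos]
    rw [h2, h3] at h1
    exact h1.symm
  have het := h.elt2 t
  have hEt : 2 * (V t % 2 ^ (r + 1)) + e t = 2 ^ (r + 2) - 1 := by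
    rw [← mod_double _ _ _ (by omega), ← hVt1, h.hs]
    rw [Nat.mod_mod_of_dvd _ (pow_dvd_pow 2 (by omega))]
  have hp2 : 2 ^ (r + 2) = 4 * 2 ^ r := by ring
  have hp1 : 2 ^ (r + 1) = 2 * 2 ^ r := by ring
  have het1 : e t = 1 := by omega
  have hVt : V t % 2 ^ (r + 1) = 2 ^ (r + 1) - 1 := by omega
  set Z := V t / 2 ^ (r + 1) with hZ
  have hVtZ : V t = Z * 2 ^ (r + 1) + (2 ^ (r + 1) - 1) := by
    have := Nat.div_add_mod (V t) (2 ^ (r + 1))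
    rw [hVt, ← hZ, mul_comm] at this
    exact this.symm
  have hZlt : Z < 2 ^ (d + 1) := by
    rw [hZ, Nat.div_lt_iff_lt_mul (by positivity)]
    have := h.Vlt t
    rw [← pow_add]
    convert this using 2
    omega
  -- backward phase
  have back : ∀ c' ≤ r + 1, ∀ c, c + c' = r + 1 → ∀ v < 2 ^ m,
      v % 2 ^ (d + 1 + c) = Z * 2 ^ c + (2 ^ c - 1) → ∃ j ≤ t, 2 * V j + e j = 2 * v + 1 := by
    intro c'
    induction c' with
    | zero =>
      intro _ c hc v hv hvm
      obtain rfl : c = r + 1 := by omega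
      rw [show d + 1 + (r + 1) = m by omega, Nat.mod_eq_of_lt hv, ← hVtZ] at hvm
      exact ⟨t, le_rfl, by omega⟩
    | succ c' ih =>
      intro hc' c hc v hv hvm
      have hcpos : 0 < 2 ^ c := by positivity
      obtain ⟨j, hj, hE⟩ := ih (by omega) (c + 1) (by omega) ((2 * v + 1) % 2 ^ m)
        (Nat.mod_lt _ hM) (by
          rw [Nat.mod_mod_of_dvd _ (pow_dvd_pow 2 (by omega)), ← add_assoc,
            mod_double _ _ _ (by omega), hvm, pow_succ, ← mul_assoc]
          omega)
      obtain ⟨j', hj', hE'⟩ := h.pred (by omega) hE (u := 2 * v + 1) (by omega) rfl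
      exact ⟨j', by omega, hE'⟩
  have halfmod : ∀ v s, s < m → ((v + 2 ^ m) / 2) % 2 ^ s = (v / 2) % 2 ^ s := by
    intro v s hs
    obtain ⟨q, rfl⟩ : ∃ q, m = s + 1 + q := ⟨m - s - 1, by omega⟩
    have : (v + 2 ^ (s + 1 + q)) / 2 = v / 2 + 2 ^ s * 2 ^ q := by
      have : 2 ^ (s + 1 + q) = 2 * (2 ^ s * 2 ^ q) := by ring
      omega
    rw [this, Nat.add_mul_mod_self_left]
  -- forward phase
  have fwd : ∀ c ≤ r, ∀ v < 2 ^ m,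
      v % 2 ^ (d + 1 + (c + 1)) = Z * 2 ^ (c + 1) + (2 ^ c - 1) →
      ∃ j < k, 2 * V j + e j = 2 * v + 1 := by
    intro c
    induction c with
    | zero =>
      intro _ v hv hvm
      simp only [zero_add, pow_one, pow_zero, Nat.sub_self, add_zero] at hvm
      have hv2 : v % 2 = 0 := by
        rw [← Nat.mod_mod_of_dvd v (show 2 ∣ 2 ^ (d + 1 + 1) from dvd_pow_self 2 (by omega)), hvm]
        omega
      have hM2 : 2 ^ m = 2 * 2 ^ (d + r + 1) := by rw [hm]; ring
      have key : ∀ u, u < 2 ^ m → u % 2 ^ (d + 1) = Z → ∃ j ≤ t, 2 * V j + e j = 2 * u := by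
        intro u hu huZ
        obtain ⟨j, hj, hE⟩ := back (r + 1) le_rfl 0 (by omega) u hu (by simpa using huZ)
        obtain ⟨b, hb, hb1, hb2⟩ := h.firstVisit j
        have := h.elt2 j
        exact ⟨b, by omega, by omega⟩
      have hm1 : (v / 2) % 2 ^ (d + 1) = Z := by rw [mod_half, hvm]; omega
      have hm2 : ((v + 2 ^ m) / 2) % 2 ^ (d + 1) = Z := by
        rw [halfmod _ _ (by omega), hm1]
      obtain ⟨a, ha, hEa⟩ := key (v / 2) (by omega) hm1
      obtain ⟨b, hb, hEb⟩ := key ((v + 2 ^ m) / 2) (by omega) hm2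
      obtain ⟨j, hj, hE⟩ := h.succ2 hv (a := a) (b := b) (by omega) (by omega)
        (t := t + 1) (by omega) (by omega)
      refine ⟨j, lt_of_le_of_ne (by omega) ?_, hE⟩
      rintro rfl
      have hd0 : d = 0 := by omega
      subst hd0
      omega
    | succ c ih =>
      intro hc v hv hvm
      have hcpos : 0 < 2 ^ c := by positivity
      have hc1 : 2 ^ (c + 1) = 2 * 2 ^ c := by ring
      have hZ2 : Z * 2 ^ (c + 1 + 1) = 2 * (Z * 2 ^ (c + 1)) := by ring
      have hv2 : v % 2 = 1 := by
        rw [← Nat.mod_mod_of_dvd v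
          (show 2 ∣ 2 ^ (d + 1 + (c + 1 + 1)) from dvd_pow_self 2 (by omega)), hvm]
        omega
      have hM2 : 2 ^ m = 2 * 2 ^ (d + r + 1) := by rw [hm]; ring
      have hm1 : (v / 2) % 2 ^ (d + 1 + (c + 1)) = Z * 2 ^ (c + 1) + (2 ^ c - 1) := by
        rw [mod_half, add_assoc, add_assoc, ← add_assoc d, hvm]; omega
      have hm2 : ((v + 2 ^ m) / 2) % 2 ^ (d + 1 + (c + 1)) = Z * 2 ^ (c + 1) + (2 ^ c - 1) := by
        rw [halfmod _ _ (by omega), hm1]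
      obtain ⟨a, ha, hEa⟩ := ih (by omega) (v / 2) (by omega) hm1
      obtain ⟨b, hb, hEb⟩ := ih (by omega) ((v + 2 ^ m) / 2) (by omega) hm2
      obtain ⟨j, hj, hE⟩ := h.succ2 hv (a := a) (b := b) (by omega) (by omega)
        (t := k) (by omega) (by omega)
      refine ⟨j, lt_of_le_of_ne hj ?_, hE⟩
      rintro rfl
      have hvk : v = 2 ^ m - 2 ^ d := by omega
      rcases Nat.eq_zero_or_pos d with hd0 | hd0
      · subst hd0
        -- compare modulo `2 ^ (c+2)`
        have h1 : v % 2 ^ (c + 2) = 2 ^ (c + 1) - 1 := by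
          rw [← Nat.mod_mod_of_dvd v (show 2 ^ (c + 2) ∣ 2 ^ (0 + 1 + (c + 1 + 1)) from
            pow_dvd_pow 2 (by omega)), hvm, mul_comm, Nat.mul_add_mod]
          apply Nat.mod_eq_of_lt
          have : 2 ^ (c + 2) = 4 * 2 ^ c := by ring
          omega
        have h2 : v % 2 ^ (c + 2) = 2 ^ (c + 2) - 1 := by
          obtain ⟨q, hq⟩ : ∃ q, m = c + 2 + q := ⟨m - c - 2, by omega⟩
          have hqpos : 0 < 2 ^ q := by positivity
          have hcc : 0 < 2 ^ (c + 2) := by positivity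
          have : v = 2 ^ (c + 2) * (2 ^ q - 1) + (2 ^ (c + 2) - 1) := by
            rw [hvk, hq, pow_add, Nat.mul_sub_one]
            have : 2 ^ (c + 2) ≤ 2 ^ (c + 2) * 2 ^ q := Nat.le_mul_of_pos_right _ hqpos
            omega
          rw [this, Nat.mul_add_mod]
          exact Nat.mod_eq_of_lt (by omega)
        have : 2 ^ (c + 2) = 4 * 2 ^ c := by ring
        omega
      · have : 2 ^ d = 2 * 2 ^ (d - 1) := by
          rw [← pow_succ']; congr 1; omega
        omega
  -- visit chain
  have hrd : 2 ^ (r + 1) = 2 * 2 ^ r := by ring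
  have chain : ∀ c, ∃ j < k, V j = ((Z * 2 ^ (r + 2) + (2 ^ (r + 1) - 1)) * 2 ^ c) % 2 ^ m := by
    have before : ∀ x, (∃ j ≤ k, V j = x) → ∃ j < k, V j = x := by
      rintro x ⟨j, hj, hx⟩
      rcases Nat.lt_or_ge j k with h1 | h1
      · exact ⟨j, h1, hx⟩
      · obtain rfl : j = k := by omega
        rcases h.he0 j with h2 | ⟨_, j', hj', hv'⟩
        · omega
        · exact ⟨j', hj', by omega⟩
    intro c
    apply before
    induction c with
    | zero =>
      obtain ⟨j, hj, hE⟩ := fwd r le_rfl (Z * 2 ^ (r + 1) + (2 ^ r - 1))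
        (by have := h.Vlt t; omega)
        (by apply Nat.mod_eq_of_lt
            rw [show d + 1 + (r + 1) = m by omega]
            have := h.Vlt t; omega)
      refine ⟨j + 1, by omega, ?_⟩
      rw [h.hs, hE]
      congr 1
      have : Z * 2 ^ (r + 2) = 2 * (Z * 2 ^ (r + 1)) := by ring
      rw [this, pow_zero, mul_one]
      omega
    | succ c ih =>
      obtain ⟨j, hj, hVj⟩ := before _ ih
      obtain ⟨b, hb, hb1, hb2⟩ := h.firstVisit j
      refine ⟨b + 1, by omega, ?_⟩
      rw [h.hs, hb2, hb1, hVj, add_zero, Nat.mul_mod_mod]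
      congr 1
      ring
  obtain ⟨j, hj, hVj⟩ := chain d
  have hU : V j = (2 ^ (r + 1) - 1) * 2 ^ d := by
    rw [hVj, add_mul, mul_assoc, ← pow_add, show r + 2 + d = m by omega, mul_comm,
      Nat.mul_add_mod]
    apply Nat.mod_eq_of_lt
    rw [hMd, mul_comm]
    apply Nat.mul_lt_mul_of_pos_left _ hdpos
    omega
  obtain ⟨b, hb, hb1, hb2⟩ := h.firstVisit j
  have hle : 2 ^ (d + 1) ≤ 2 ^ m := Nat.pow_le_pow_right (by norm_num) (by omega)
  have hd1 : 2 ^ (d + 1) = 2 * 2 ^ d := by ring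
  have hUM : 2 * V j = 2 ^ m - 2 ^ (d + 1) := by
    rw [hU, hMd, hp2, hd1, hrd, Nat.sub_mul, one_mul, Nat.mul_sub]
    congr 1
    ring
  have hVb : V (b + 1) = 2 ^ m - 2 ^ (d + 1) := by
    rw [h.hs, hb1, hb2, add_zero, hUM]
    exact Nat.mod_eq_of_lt (by omega)
  have hVd := (h.startSeg (d + 1) (by omega)).1
  have hVd0 := (h.startSeg d (by omega)).1
  have hbd : b ≠ d := by
    rintro rfl
    omega
  have hbk : b + 1 ≠ k := by
    intro hh
    rw [hh, hV] at hVb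
    omega
  rcases lt_or_gt_of_ne hbd with hl | hl
  · have := h.he1 (d + 1) (b + 1) (by omega) (by omega)
    exact ⟨d + 1, by omega, by omega⟩
  · have := h.he1 (b + 1) (d + 1) (by omega) (by omega)
    exact ⟨b + 1, by omega, by omega⟩

theorem claim' (h : Gr m V e) {k d : ℕ} (hk : k < 2 * 2 ^ m)
    (hV : V k = 2 ^ m - 2 ^ d) (he : e k = 1) :
    ∀ q, d + q + 2 ≤ m → ∃ j < k, 2 * V j + e j = 2 * (2 ^ m - 2 ^ (d + q + 1)) + 1 := by
  intro q
  induction q with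
  | zero => intro hq; exact h.claim (r := m - d - 2) (by omega) hk hV he
  | succ q ih =>
    intro hq
    obtain ⟨j, hj, hE⟩ := ih (by omega)
    have := h.elt2 j
    obtain ⟨j', hj', hE'⟩ := h.claim (k := j) (d := d + q + 1) (r := m - (d + q + 1) - 2)
      (by omega) (by omega) (by omega) (by omega)
    exact ⟨j', by omega, hE'⟩

end Gr

/-- code of the length `k` window of `f` at `j`. -/
def cd (f : ℕ → ℕ) : ℕ → ℕ → ℕ
  | 0, _ => 0
  | k + 1, j => 2 * cd f k j + f (j + k)

lemma cd_lt (f : ℕ → ℕ) (hf : ∀ i, f i < 2) (k j : ℕ) : cd f k j < 2 ^ k := by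
  induction k with
  | zero => simp [cd]
  | succ k ih => have := hf (j + k); simp only [cd, pow_succ]; omega

lemma cd_congr (f g : ℕ → ℕ) (k j j' : ℕ) (h : ∀ i < k, f (j + i) = g (j' + i)) :
    cd f k j = cd g k j' := by
  induction k with
  | zero => rfl
  | succ k ih =>
    simp only [cd]
    rw [ih (fun i hi => h i (by omega)), h k (by omega)]

lemma cd_inj (f g : ℕ → ℕ) (hf : ∀ i, f i < 2) (hg : ∀ i, g i < 2) (k j j' : ℕ)
    (h : cd f k j = cd g k j') : ∀ i < k, f (j + i) = g (j' + i) := by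
  induction k with
  | zero => intro i hi; omega
  | succ k ih =>
    simp only [cd] at h
    have h1 := hf (j + k)
    have h2 := hg (j' + k)
    intro i hi
    rcases Nat.lt_or_ge i k with h3 | h3
    · exact ih (by omega) i h3
    · obtain rfl : i = k := by omega
      omega

lemma cd_front (f : ℕ → ℕ) (k j : ℕ) : cd f (k + 1) j = f j * 2 ^ k + cd f k (j + 1) := by
  induction k with
  | zero => simp [cd]
  | succ k ih =>
    rw [cd, ih, cd, pow_succ, show j + 1 + k = j + (k + 1) by ring]
    ring

lemma cd_shift (f : ℕ → ℕ) (hf : ∀ i, f i < 2) (k j : ℕ) :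
    cd f k (j + 1) = cd f (k + 1) j % 2 ^ k := by
  rw [cd_front, mul_comm, Nat.mul_add_mod, Nat.mod_eq_of_lt (cd_lt f hf _ _)]

lemma cd_walk (m : ℕ) (V f : ℕ → ℕ) (hV : ∀ j, V (j + 1) = (2 * V j + f j) % 2 ^ m)
    (h0 : ∀ j, V j < 2 ^ m) (hf : ∀ i, f i < 2) (j : ℕ) : V (j + m) = cd f m j := by
  have key : ∀ l, V (j + l) = (V j * 2 ^ l + cd f l j) % 2 ^ m := by
    intro l
    induction l with
    | zero => simp [cd, Nat.mod_eq_of_lt (h0 j)]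
    | succ l ih =>
      rw [← add_assoc, hV, ih, Nat.add_mod, Nat.mul_mod_mod, ← Nat.add_mod, cd]
      congr 1
      ring
  rw [key m, mul_comm, Nat.mul_add_mod, Nat.mod_eq_of_lt (cd_lt f hf _ _)]

namespace Gr
variable {m : ℕ} {V e : ℕ → ℕ}

lemma eb (h : Gr m V e) (i : ℕ) : e i < 2 := by have := h.elt2 i; omega

lemma walk (h : Gr m V e) (j : ℕ) : V (j + m) = cd e m j :=
  cd_walk m V e h.hs h.Vlt h.eb j

theorem lex (h : Gr m V e) (hm1 : 1 ≤ m) (f : ℕ → ℕ) (hf : ∀ i, f i < 2)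
    (hinj : ∀ a b, a < 2 * 2 ^ m → b < 2 * 2 ^ m → cd f (m + 1) a = cd f (m + 1) b → a = b)
    {k : ℕ} (hk : k < 2 * 2 ^ m) (hpre : ∀ i < k, f i = e i) (hfk : f k = 0) (hek : e k = 1) :
    False := by
  have hM := Mpos m
  have hE : ∀ j, m ≤ j → j < k → cd f (m + 1) (j - m) = 2 * V j + e j := by
    intro j hmj hjk
    obtain ⟨a, rfl⟩ : ∃ a, j = a + m := ⟨j - m, by omega⟩
    rw [Nat.add_sub_cancel, h.walk, cd, hpre _ hjk, cd_congr f e m a a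
      (fun i hi => hpre _ (by omega))]
  have hlate : ∀ j, e j = 1 → m < j := by
    intro j hj
    by_contra hcon
    have := (h.startSeg j (by omega)).2
    omega
  have hmk := hlate k hek
  obtain ⟨p, rfl⟩ : ∃ p, k = p + m := ⟨k - m, by omega⟩
  have hvp : cd f m p = V (p + m) := by
    rw [h.walk, cd_congr f e m p p (fun i hi => hpre _ (by omega))]
  have hEp : cd f (m + 1) p = 2 * V (p + m) := by rw [cd, hvp, hfk, add_zero]
  -- first visit
  obtain ⟨d, hd, hVd, hed⟩ := h.firstVisit (p + m)
  have hdk : d < p + m := lt_of_le_of_ne hd (by rintro rfl; omega)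
  have hdm : d < m := by
    by_contra hcon
    have := hinj (d - m) p (by omega) (by omega) (by rw [hE d (by omega) hdk, hEp]; omega)
    omega
  have hV : V (p + m) = 2 ^ m - 2 ^ d := by rw [← hVd]; exact (h.startSeg d (by omega)).1
  have hcl := h.claim' hk hV hek
  have run : ∀ q, d + q + 1 ≤ m → cd f m (p + q + 1) = 2 ^ m - 2 ^ (d + q + 1) := by
    have step : ∀ j b, b < m → cd f (m + 1) j = 2 * (2 ^ m - 2 ^ b) →
        cd f m (j + 1) = 2 ^ m - 2 ^ (b + 1) := by
      intro j b hb hc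
      have : 2 ^ (b + 1) ≤ 2 ^ m := Nat.pow_le_pow_right (by norm_num) (by omega)
      have : 0 < 2 ^ b := by positivity
      rw [cd_shift f hf, hc]
      rw [pow_succ] at *
      rw [Nat.mod_eq_sub_mod (by omega), Nat.mod_eq_of_lt (by omega)]
      omega
    intro q
    induction q with
    | zero => intro hq; exact step p d hdm (by rw [hEp, hV])
    | succ q ih =>
      intro hq
      have hc := ih (by omega)
      obtain ⟨j, hj, hEj⟩ := hcl q (by omega)
      have hb := h.elt2 j
      have hjm := hlate j (by omega)
      have h0 : f (p + q + 1 + m) = 0 := by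
        by_contra hne
        have h1 : f (p + q + 1 + m) = 1 := by have := hf (p + q + 1 + m); omega
        have hm2 : m < 2 ^ m := Nat.lt_two_pow_self
        have := hinj (j - m) (p + q + 1) (by omega) (by omega)
          (by rw [hE j (by omega) hj, hEj, cd, hc, h1])
        omega
      exact step (p + q + 1) (d + q + 1) (by omega) (by rw [cd, hc, h0, add_zero])
  have hz := run (m - 1 - d) (by omega)
  rw [show d + (m - 1 - d) + 1 = m by omega, Nat.sub_self] at hz
  have hzero : ∀ j ≤ 1, cd f m j = 0 := by
    intro j hj
    have h1 : cd f m j = cd (fun _ => 0) m 0 :=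
      cd_congr _ _ _ _ _ (fun i hi => by
        rw [hpre _ (by omega)]; exact (h.startSeg _ (by omega)).2)
    rw [h1]
    clear * -
    induction m with
    | zero => rfl
    | succ m ih => simp [cd, ih]
  have e0 : cd f (m + 1) 0 = f (0 + m) := by rw [cd, hzero 0 (by omega), mul_zero, zero_add]
  have e1 : cd f (m + 1) 1 = f (1 + m) := by rw [cd, hzero 1 (by omega), mul_zero, zero_add]
  have e2 : cd f (m + 1) (p + (m - 1 - d) + 1) = f (p + (m - 1 - d) + 1 + m) := by
    rw [cd, hz, mul_zero, zero_add]
  have b0 := hf (0 + m)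
  have b1 := hf (1 + m)
  have b2 := hf (p + (m - 1 - d) + 1 + m)
  have i01 := hinj 0 1 (by omega) (by omega)
  have i02 := hinj 0 (p + (m - 1 - d) + 1) (by omega) (by omega)
  have i12 := hinj 1 (p + (m - 1 - d) + 1) (by omega) (by omega)
  omega

/-- the cyclic greedy word has injective windows -/
theorem cyc (h : Gr m V e) : ∀ a b, a < 2 * 2 ^ m → b < 2 * 2 ^ m →
    cd (fun i => e (i % (2 * 2 ^ m))) (m + 1) a = cd (fun i => e (i % (2 * 2 ^ m))) (m + 1) b →
    a = b := by
  obtain ⟨hinj, hT, -⟩ := h.main1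
  have hM := Mpos m
  set L := 2 * 2 ^ m with hL
  have hw := cd_walk m (fun j => V (j % L)) (fun i => e (i % L)) (by
    intro j
    have hj : j % L < L := Nat.mod_lt _ (by omega)
    have hj2 : (j + 1) % L = (j % L + 1) % L := by simp
    rw [hj2, ← h.hs]
    rcases Nat.lt_or_ge (j % L + 1) L with h1 | h1
    · rw [Nat.mod_eq_of_lt h1]
    · rw [show j % L + 1 = L by omega, Nat.mod_self, hT, h.h0])
    (fun j => h.Vlt _) (fun i => h.eb _)
  intro a b ha hb hab
  rw [cd, cd, ← hw, ← hw] at hab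
  have h1 := hinj _ _ (Nat.mod_lt _ (by omega)) (Nat.mod_lt _ (by omega)) hab
  have h2 : a ≡ b [MOD L] := Nat.ModEq.add_right_cancel' m h1
  exact Nat.ModEq.eq_of_lt_of_lt h2 ha hb

theorem tail (h : Gr m V e) (i : ℕ) (h1 : 2 * 2 ^ m - (m + 1) ≤ i) (h2 : i < 2 * 2 ^ m) :
    e i = 1 := by
  have hm2 : m < 2 ^ m := Nat.lt_two_pow_self
  have h3 : cd e (m + 1) (2 * 2 ^ m - (m + 1)) = 2 * 2 ^ m - 1 := by
    rw [cd, ← h.walk, show 2 * 2 ^ m - (m + 1) + m = 2 * 2 ^ m - 1 by omega, h.lastEdge]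
  have h4 : ∀ k, cd (fun _ => 1) k 0 = 2 ^ k - 1 := by
    intro k
    induction k with
    | zero => rfl
    | succ k ih => have := Mpos k; simp only [cd, ih, pow_succ]; omega
  have := cd_inj e (fun _ => 1) h.eb (by simp) (m + 1) _ 0
    (by rw [h3, h4, pow_succ, mul_comm]) (i - (2 * 2 ^ m - (m + 1))) (by omega)
  rwa [show 2 * 2 ^ m - (m + 1) + (i - (2 * 2 ^ m - (m + 1))) = i by omega] at this

end Gr

/-- state of the greedy walk: current vertex, set of visited vertices -/
def gst (m : ℕ) : ℕ → ℕ × Finset ℕ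
  | 0 => (2 ^ m - 1, ∅)
  | j + 1 => ((2 * (gst m j).1 + (decide ((gst m j).1 ∈ (gst m j).2)).toNat) % 2 ^ m,
      insert (gst m j).1 (gst m j).2)

def gbit (m j : ℕ) : Bool := decide ((gst m j).1 ∈ (gst m j).2)

lemma gst_mem (m j v : ℕ) : v ∈ (gst m j).2 ↔ ∃ j' < j, (gst m j').1 = v := by
  induction j with
  | zero => simp [gst]
  | succ j ih =>
    simp only [gst, Finset.mem_insert, ih]
    constructor
    · rintro (h | ⟨j', h1, h2⟩)
      · exact ⟨j, by omega, h.symm⟩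
      · exact ⟨j', by omega, h2⟩
    · rintro ⟨j', h1, h2⟩
      rcases Nat.lt_or_ge j' j with h3 | h3
      · exact Or.inr ⟨j', h3, h2⟩
      · obtain rfl : j' = j := by omega
        exact Or.inl h2.symm

lemma gr (m : ℕ) : Gr m (fun j => (gst m j).1) (fun j => (gbit m j).toNat) where
  h0 := rfl
  hs := fun j => rfl
  he1 := by
    intro j j' hj hv
    have : (gst m j).1 ∈ (gst m j).2 := (gst_mem _ _ _).2 ⟨j', hj, hv⟩
    simp [gbit, this]
  he0 := by
    intro j
    by_cases h : (gst m j).1 ∈ (gst m j).2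
    · right
      exact ⟨by simp [gbit, h], (gst_mem _ _ _).1 h⟩
    · left; simp [gbit, h]

/-- cyclic bit function of a list -/
def fx (x : List Bool) (i : ℕ) : ℕ := (x.getD (i % x.length) false).toNat

lemma fx_lt (x : List Bool) (i : ℕ) : fx x i < 2 := Bool.toNat_lt _

lemma toNat_inj {a b : Bool} (h : a.toNat = b.toNat) : a = b := by
  cases a <;> cases b <;> simp_all

lemma window (m : ℕ) (x w : List Bool) (hx : x.length = 2 ^ (m + 1)) (hw : w.length = m + 1)
    (j : ℕ) (hj : j < 2 ^ (m + 1)) :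
    (((x ++ x.take m).drop j).take w.length = w) ↔
      cd (fx x) (m + 1) j = cd (fun i => (w.getD i false).toNat) (m + 1) 0 := by
  have hm2 : m + 1 < 2 ^ (m + 1) := Nat.lt_two_pow_self
  have hbit : ∀ i < m + 1, (x ++ x.take m).getD (j + i) false = x.getD ((j + i) % x.length) false := by
    intro i hi
    rcases Nat.lt_or_ge (j + i) x.length with h1 | h1
    · rw [Nat.mod_eq_of_lt h1, List.getD_append _ _ _ _ h1]
    · rw [List.getD_append_right _ _ _ _ h1, Nat.mod_eq_sub_mod h1, Nat.mod_eq_of_lt (by omega)]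
      simp only [List.getD_eq_getElem?_getD]
      rw [List.getElem?_take_of_lt (by omega)]
  have hlen : (((x ++ x.take m).drop j).take w.length).length = m + 1 := by
    simp; omega
  constructor
  · intro h
    apply cd_congr
    intro i hi
    simp only [fx, zero_add]
    rw [← hbit i hi]
    congr 1
    conv_rhs => rw [← h]
    simp only [List.getD_eq_getElem?_getD]
    rw [List.getElem?_take_of_lt (by omega), List.getElem?_drop]
  · intro h
    have h2 := cd_inj _ _ (fx_lt x) (fun i => Bool.toNat_lt _) _ _ _ h
    apply List.ext_getElem (by omega)
    intro i h3 h4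
    have h5 := toNat_inj (h2 i (by omega))
    rw [← hbit i (by omega)] at h5
    simp only [zero_add] at h5
    rw [List.getD_eq_getElem _ _ h4, List.getD_eq_getElem _ _ (by simp; omega)] at h5
    simpa using h5

lemma db_iff (m : ℕ) (x : List Bool) : IsDeBruijn (m + 1) x ↔ x.length = 2 ^ (m + 1) ∧
    ∀ a b, a < 2 ^ (m + 1) → b < 2 ^ (m + 1) →
      cd (fx x) (m + 1) a = cd (fx x) (m + 1) b → a = b := by
  have hm2 : m + 1 < 2 ^ (m + 1) := Nat.lt_two_pow_self
  unfold IsDeBruijn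
  refine and_congr_right (fun hx => ?_)
  rw [Nat.add_sub_cancel]
  have hocc : ∀ w : List Bool, w.length = m + 1 → occ w (x ++ x.take m) =
      ((Finset.range (2 ^ (m + 1))).filter (fun j =>
        cd (fx x) (m + 1) j = cd (fun i => (w.getD i false).toNat) (m + 1) 0)).card := by
    intro w hw
    have hl : (x ++ x.take m).length + 1 - w.length = 2 ^ (m + 1) := by
      simp; omega
    unfold occ
    rw [hl]
    have : (Finset.range (2 ^ (m + 1))).filter (fun j =>
        cd (fx x) (m + 1) j = cd (fun i => (w.getD i false).toNat) (m + 1) 0) =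
        ((List.range (2 ^ (m + 1))).filter
          (fun i => decide (((x ++ x.take m).drop i).take w.length = w))).toFinset := by
      ext j
      simp only [Finset.mem_filter, Finset.mem_range, List.mem_toFinset, List.mem_filter,
        List.mem_range, decide_eq_true_eq]
      exact and_congr_right (fun hj => (window m x w hx hw j hj).symm)
    rw [this, List.toFinset_card_of_nodup (List.nodup_range.filter _)]
  constructor
  · intro h a b ha hb hab
    set w := (List.range (m + 1)).map (fun i => x.getD ((a + i) % x.length) false) with hw
    have hwl : w.length = m + 1 := by simp [hw]
    have hc : cd (fx x) (m + 1) a = cd (fun i => (w.getD i false).toNat) (m + 1) 0 := by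
      apply cd_congr
      intro i hi
      simp only [zero_add, fx]
      rw [List.getD_eq_getElem w _ (by omega)]
      simp [hw]
    have h1 := h w hwl
    rw [hocc w hwl, Finset.card_eq_one] at h1
    obtain ⟨c, hc'⟩ := h1
    have ma : a ∈ ({c} : Finset ℕ) := by rw [← hc']; simp [ha, hc]
    have mb : b ∈ ({c} : Finset ℕ) := by rw [← hc']; simp [hb, ← hab, hc]
    simp only [Finset.mem_singleton] at ma mb
    omega
  · intro h w hw
    rw [hocc w hw]
    have hs : Set.SurjOn (cd (fx x) (m + 1)) (Finset.range (2 ^ (m + 1)))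
        (Finset.range (2 ^ (m + 1))) :=
      Finset.surjOn_of_injOn_of_card_le _ (fun j _ => by simpa using cd_lt _ (fx_lt x) _ _)
        (fun a ha b hb hab => h a b (by simpa using ha) (by simpa using hb) hab) le_rfl
    obtain ⟨j, hj, hjc⟩ := hs (a := cd (fun i => (w.getD i false).toNat) (m + 1) 0)
      (by simpa using cd_lt _ (fun i => Bool.toNat_lt _) _ _)
    rw [Finset.card_eq_one]
    refine ⟨j, ?_⟩
    ext a
    simp only [Finset.coe_range, Set.mem_Iio] at hj
    simp only [Finset.mem_filter, Finset.mem_range, Finset.mem_singleton]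
    constructor
    · rintro ⟨ha, hac⟩
      exact h a j ha hj (by rw [hac, hjc])
    · rintro rfl
      exact ⟨hj, hjc⟩

/-- The greedy word. -/
def gw (m : ℕ) : List Bool := (List.range (2 ^ (m + 1))).map (gbit m)

lemma gw_db (m : ℕ) : IsDeBruijn (m + 1) (gw m) := by
  rw [db_iff]
  have hl : (gw m).length = 2 ^ (m + 1) := by simp [gw]
  refine ⟨hl, ?_⟩
  have hfx : fx (gw m) = fun i => (gbit m (i % (2 * 2 ^ m))).toNat := by
    funext i
    have : i % 2 ^ (m + 1) < 2 ^ (m + 1) := Nat.mod_lt _ (by positivity)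
    unfold fx
    rw [List.getD_eq_getElem _ _ (by rw [hl]; exact this)]
    simp [gw, pow_succ, mul_comm]
  rw [hfx, pow_succ, mul_comm]
  exact (gr m).cyc

lemma gw_le (m : ℕ) (hm : 1 ≤ m) (y : List Bool) (hy : IsDeBruijn (m + 1) y) : gw m ≤ y := by
  by_contra hlt
  have hlt' : y < gw m := lt_of_not_ge hlt
  rw [db_iff] at hy
  obtain ⟨hyl, hyi⟩ := hy
  have hl : (gw m).length = 2 ^ (m + 1) := by simp [gw]
  rw [List.lt_iff_exists] at hlt'
  rcases hlt' with ⟨_, h2⟩ | ⟨k, h1, h2, h3, h4⟩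
  · omega
  have hfy : ∀ i (hi : i < y.length), fx y i = (y[i]).toNat := by
    intro i hi
    unfold fx
    rw [Nat.mod_eq_of_lt hi, List.getD_eq_getElem _ _ hi]
  have hb : y[k] = false ∧ gbit m k = true := by
    have : (gw m)[k] = gbit m k := by simp [gw]
    rw [this] at h4
    revert h4
    cases y[k] <;> cases gbit m k <;> simp
  refine (gr m).lex hm (fx y) (fx_lt y) (by rw [pow_succ, mul_comm] at hyi; exact hyi)
    (k := k) (by rw [pow_succ] at hyl; omega) ?_ (by rw [hfy k h1, hb.1]; rfl)
    (by simp [hb.2])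
  intro i hi
  rw [hfy i (by omega), h3 i hi]
  simp [gw]

lemma db_eq (m : ℕ) (hm : 1 ≤ m) : db (m + 1) = gw m := by
  have h : ∃ x : List Bool, IsDeBruijn (m + 1) x ∧ ∀ y, IsDeBruijn (m + 1) y → x ≤ y :=
    ⟨gw m, gw_db m, gw_le m hm⟩
  unfold db
  rw [dif_pos h]
  exact le_antisymm (h.choose_spec.2 _ (gw_db m)) (gw_le m hm _ h.choose_spec.1)

/-- For every `n ≥ 3`, the last `n` bits of `db n` are all `1`s. -/
theorem stmt2 (n : ℕ) (hn : 3 ≤ n) :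
    (db n).drop (2 ^ n - n) = List.replicate n true := by
  obtain ⟨m, rfl⟩ : ∃ m, n = m + 1 := ⟨n - 1, by omega⟩
  have hm2 : m + 1 < 2 ^ (m + 1) := Nat.lt_two_pow_self
  rw [db_eq m (by omega)]
  apply List.ext_getElem
  · simp [gw]; omega
  · intro i h1 h2
    simp only [List.length_replicate] at h2
    have h3 := (gr m).tail (2 ^ (m + 1) - (m + 1) + i) (by rw [pow_succ]; omega)
      (by rw [pow_succ] at *; omega)
    have h4 : gbit m (2 ^ (m + 1) - (m + 1) + i) = true := toNat_inj h3
    simpa [gw] using h4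
end

section
/- Let n ≥ 1 and write n = 2^s·t with t odd. For every binary string w of length n there is exactly one index i ∈ {0, …, 2^s−1} such that w occurs as an aligned block of the string B_{n,i} = db_i(n)^t (i.e., occ_B(w, B_{n,i}) = 1), and occ_B(w, B_{n,j}) = 0 for every j ≠ i. Consequently each block B_{n,i} contains exactly 2^{n−s} distinct binary strings of length n as aligned blocks, each exactly once. -/
namespace DB

def stepOK {n : ℕ} (f : Equiv.Perm (Fin n → Bool)) : Prop :=
  ∀ w : Fin n → Bool, ∀ j (h : j + 1 < n), f w ⟨j, by omega⟩ = w ⟨j + 1, h⟩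

theorem reach {α : Type*} [DecidableEq α] (f : Equiv.Perm α) (w w' : α) (k : ℕ) :
    ∀ c, (f ^ k) c = w → ¬ f.SameCycle w w' → (f * Equiv.swap w w').SameCycle c w := by
  induction k with
  | zero => intro c hc _; simp at hc; rw [hc]
  | succ k ih =>
    intro c hc hn
    by_cases h1 : c = w
    · rw [h1]
    have h2 : c ≠ w' := by
      rintro rfl
      exact hn (Equiv.Perm.SameCycle.symm ⟨(k + 1 : ℕ), by rw [zpow_natCast]; exact hc⟩)
    have h3 : (f * Equiv.swap w w') c = f c := by
      simp [Equiv.swap_apply_of_ne_of_ne h1 h2]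
    have h4 := ih (f c) (by rw [pow_succ] at hc; exact hc) hn
    rw [← h3] at h4
    exact (Equiv.Perm.sameCycle_apply_left).1 h4

theorem merge {α : Type*} [DecidableEq α] [Finite α] (f : Equiv.Perm α) (w w' : α)
    (hn : ¬ f.SameCycle w w') : 
    (∀ c, f.SameCycle w c → (f * Equiv.swap w w').SameCycle w c) ∧
      (f * Equiv.swap w w').SameCycle w w' := by
  constructor
  · intro c hc
    obtain ⟨k, hk⟩ := hc.symm.exists_nat_pow_eq
    exact (reach f w w' k c hk hn).symm
  · have h1 : f.SameCycle (f w') w' := Equiv.Perm.sameCycle_apply_left.2 (Equiv.Perm.SameCycle.refl _ _)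
    obtain ⟨k, hk⟩ := h1.exists_nat_pow_eq
    have h2 := reach f w' w k (f w') hk (fun h => hn h.symm)
    rw [Equiv.swap_comm] at h2
    have h3 : (f * Equiv.swap w w') w = f w' := by simp
    rw [← h3] at h2
    exact Equiv.Perm.sameCycle_apply_left.1 h2

theorem exists_stepOK (n : ℕ) : ∃ f : Equiv.Perm (Fin n → Bool), stepOK f := by
  rcases n with _ | n
  · exact ⟨1, fun w j h => by omega⟩
  refine ⟨Equiv.arrowCongr (finRotate (n+1)).symm (Equiv.refl _), ?_⟩
  intro w j h
  simp only [Equiv.arrowCongr_apply, Equiv.coe_refl, Function.comp, Equiv.symm_symm, id]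
  congr 1
  rw [finRotate_of_lt (by omega)]

/-- flip the first bit -/
def flip {n : ℕ} (hn : 0 < n) (w : Fin n → Bool) : Fin n → Bool :=
  Function.update w ⟨0, hn⟩ (!w ⟨0, hn⟩)

theorem stepOK_swap {n : ℕ} (hn : 0 < n) (f : Equiv.Perm (Fin n → Bool)) (hf : stepOK f)
    (w : Fin n → Bool) : stepOK (f * Equiv.swap w (flip hn w)) := by
  intro c j h
  have key : flip hn w ⟨j + 1, h⟩ = w ⟨j + 1, h⟩ := by
    simp [flip, Function.update]
  simp only [Equiv.Perm.mul_apply]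
  rw [hf _ j h]
  by_cases h1 : c = w
  · subst h1; simp [key]
  by_cases h2 : c = flip hn w
  · subst h2; simp [key]
  rw [Equiv.swap_apply_of_ne_of_ne h1 h2]

theorem succ_cases {n : ℕ} (hn : 0 < n) (f : Equiv.Perm (Fin n → Bool)) (hf : stepOK f)
    (w v : Fin n → Bool) (h : ∀ j (h : j + 1 < n), v ⟨j, by omega⟩ = w ⟨j + 1, h⟩) :
    v = f w ∨ v = f (flip hn w) := by
  have key : ∀ j (h : j + 1 < n), flip hn w ⟨j + 1, h⟩ = w ⟨j + 1, h⟩ := by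
    intro j h; simp [flip, Function.update]
  have ext : ∀ a b : Fin n → Bool, (∀ j (h : j + 1 < n), a ⟨j, by omega⟩ = b ⟨j, by omega⟩) →
      a ⟨n-1, by omega⟩ = b ⟨n-1, by omega⟩ → a = b := by
    intro a b h1 h2
    funext ⟨j, hj⟩
    by_cases h : j + 1 < n
    · exact h1 j h
    · obtain rfl : j = n - 1 := by omega
      exact h2
  have hne : f w ⟨n-1, by omega⟩ ≠ f (flip hn w) ⟨n-1, by omega⟩ := by
    intro he
    have h3 : f w = f (flip hn w) := by
      apply ext _ _ _ he
      intro j h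
      rw [hf _ j h, hf _ j h, key]
    have := congrFun (f.injective h3) ⟨0, hn⟩
    simp [flip] at this
  by_cases hv : v ⟨n-1, by omega⟩ = f w ⟨n-1, by omega⟩
  · left
    apply ext _ _ _ hv
    intro j hj; rw [h j hj, hf _ j hj]
  · right
    apply ext
    · intro j hj; rw [h j hj, hf _ j hj, key]
    · revert hv hne
      cases v ⟨n-1, by omega⟩ <;> cases f w ⟨n-1, by omega⟩ <;> cases f (flip hn w) ⟨n-1, by omega⟩ <;> simp

theorem all_of_closed {n : ℕ} (C : Set (Fin n → Bool)) (h0 : (fun _ => false) ∈ C)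
    (hC : ∀ w ∈ C, ∀ v : Fin n → Bool,
      (∀ j (h : j + 1 < n), v ⟨j, by omega⟩ = w ⟨j + 1, h⟩) → v ∈ C) (v : Fin n → Bool) : v ∈ C := by
  have : ∀ k, ∀ hk : k ≤ n, (fun j : Fin n => if h : n ≤ j.1 + k then v ⟨j.1 + k - n, by have := j.2; omega⟩ else false) ∈ C := by
    intro k
    induction k with
    | zero =>
      intro _
      convert h0 using 2 with j
      have := j.2
      rw [dif_neg (by omega)]
    | succ k ih =>
      intro hk
      apply hC _ (ih (by omega))
      intro j h
      simp only
      by_cases h' : n ≤ j + (k + 1)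
      · rw [dif_pos h', dif_pos (by omega)]
        congr 2; omega
      · rw [dif_neg h', dif_neg (by omega)]
  convert this n le_rfl using 2 with j
  rw [dif_pos (by omega)]
  congr 1
  ext; simp

theorem exists_cycle (n : ℕ) (hn : 0 < n) : ∃ f : Equiv.Perm (Fin n → Bool), stepOK f ∧
    ∀ v, f.SameCycle (fun _ => false) v := by
  classical
  obtain ⟨f, hf, hmax⟩ := Set.exists_max_image {f : Equiv.Perm (Fin n → Bool) | stepOK f}
    (fun f => {v | f.SameCycle (fun _ => false) v}.ncard) (Set.toFinite _) (exists_stepOK n)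
  refine ⟨f, hf, ?_⟩
  apply all_of_closed {v | f.SameCycle (fun _ => false) v} (Equiv.Perm.SameCycle.refl _ _)
  intro w hw v hv
  have hfl : f.SameCycle (fun _ => false) (flip hn w) := by
    by_contra hcon
    have hnw : ¬ f.SameCycle w (flip hn w) := fun h => hcon (Equiv.Perm.SameCycle.trans hw h)
    obtain ⟨m1, m2⟩ := merge f w _ hnw
    have h0 := m1 _ (Equiv.Perm.SameCycle.symm hw)
    have := hmax _ (stepOK_swap hn f hf w)
    refine absurd this (not_le.2 (Set.ncard_lt_ncard ?_ (Set.toFinite _)))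
    refine ⟨fun c hc => h0.symm.trans (m1 c (Equiv.Perm.SameCycle.trans (Equiv.Perm.SameCycle.symm hw) hc)), fun hsub => hcon ?_⟩
    exact hsub (h0.symm.trans m2)
  rcases succ_cases hn f hf w v hv with h | h
  · rw [h]; exact Equiv.Perm.sameCycle_apply_right.2 hw
  · rw [h]; exact Equiv.Perm.sameCycle_apply_right.2 hfl

/-- `w` matches the cyclic string `x` at position `p`. -/
def Match (n : ℕ) (x w : List Bool) (p : ℕ) : Prop :=
  ∀ j < n, x.getD ((p + j) % 2 ^ n) false = w.getD j false

theorem take_drop_iff (n i : ℕ) (y w : List Bool) (hw : w.length = n) (hi : i + n ≤ y.length) :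
    (y.drop i).take w.length = w ↔ ∀ j < n, y.getD (i + j) false = w.getD j false := by
  constructor
  · intro h j hj
    conv_rhs => rw [← h]
    simp only [List.getD_eq_getElem?_getD, List.getElem?_take, List.getElem?_drop]
    rw [if_pos (by omega)]
  · intro h
    apply List.ext_getElem
    · simp; omega
    · intro j h1 h2
      have := h j (by omega)
      rw [List.getD_eq_getElem _ _ (by omega), List.getD_eq_getElem _ _ (by omega)] at this
      simpa using this

theorem lt_pow (n : ℕ) : n < 2 ^ n := Nat.lt_two_pow_self

open Classical in
theorem occ_eq (n : ℕ) (hn : 1 ≤ n) (x w : List Bool) (hx : x.length = 2 ^ n) (hw : w.length = n) :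
    occ w (x ++ x.take (n - 1)) = ((Finset.range (2 ^ n)).filter (fun p => Match n x w p)).card := by
  have hp := lt_pow n
  have hl : (x ++ x.take (n-1)).length = 2 ^ n + (n - 1) := by simp; omega
  unfold occ
  rw [hl, hw, show 2 ^ n + (n - 1) + 1 - n = 2 ^ n by omega]
  have : ((Finset.range (2 ^ n)).filter (fun p => Match n x w p)).card =
    ((List.range (2 ^ n)).filter (fun p => decide (Match n x w p))).length := rfl
  rw [this]
  congr 1
  apply List.filter_congr
  intro p hpm
  rw [List.mem_range] at hpm
  rw [decide_eq_decide]
  have := take_drop_iff n p (x ++ x.take (n-1)) w hw (by omega)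
  rw [hw] at this
  rw [this]
  apply forall₂_congr
  intro j hj
  have : (x ++ x.take (n-1)).getD (p + j) false = x.getD ((p + j) % 2 ^ n) false := by
    by_cases h : p + j < 2 ^ n
    · rw [Nat.mod_eq_of_lt h, List.getD_append _ _ _ _ (by omega)]
    · rw [List.getD_append_right _ _ _ _ (by omega), hx, Nat.mod_eq_sub_mod (by omega),
        Nat.mod_eq_of_lt (by omega)]
      simp only [List.getD_eq_getElem?_getD, List.getElem?_take]
      rw [if_pos (by omega)]
  rw [this]

theorem exists_db (n : ℕ) (hn : 1 ≤ n) : ∃ x, IsDeBruijn n x := by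
  classical
  obtain ⟨f, hf, hc⟩ := exists_cycle n hn
  set z : Fin n → Bool := fun _ => false
  let g : ℕ → (Fin n → Bool) := fun k => (f ^ k) z
  have hstep : ∀ j (hj : j < n) k, g k ⟨j, hj⟩ = g (k + j) ⟨0, hn⟩ := by
    intro j
    induction j with
    | zero => intro _ k; rfl
    | succ j ih =>
      intro hj k
      rw [← hf (g k) j hj]
      have : f (g k) = g (k + 1) := by simp only [g]; rw [pow_succ']; rfl
      rw [this, ih, show k + 1 + j = k + (j + 1) by omega]
  have hsurj : ∀ v, ∃ k, g k = v := fun v => (hc v).exists_nat_pow_eq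
  -- period
  have hN : Function.minimalPeriod f z = 2 ^ n := by
    set N := Function.minimalPeriod f z
    have hper : z ∈ Function.periodicPts f := by
      have : Function.Injective (f : _ → _) := f.injective
      exact this.mem_periodicPts z
    have hpos : 0 < N := Function.minimalPeriod_pos_of_mem_periodicPts hper
    have hg : ∀ k, g k = (f^[k]) z := by intro k; simp only [g]; rw [← Equiv.Perm.iterate_eq_pow]
    have hb : Function.Bijective (fun k : Fin N => g k.1) := by
      constructor
      · intro a b hab
        simp only [hg] at hab
        exact Fin.ext (Function.iterate_injOn_Iio_minimalPeriod a.2 b.2 hab)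
      · intro v
        obtain ⟨k, hk⟩ := hsurj v
        refine ⟨⟨k % N, Nat.mod_lt _ hpos⟩, ?_⟩
        simp only [hg] at hk ⊢
        rw [Function.iterate_mod_minimalPeriod_eq, hk]
    have := Fintype.card_of_bijective hb
    simpa using this
  have hg : ∀ k, g k = (f^[k]) z := by intro k; simp only [g]; rw [← Equiv.Perm.iterate_eq_pow]
  have hmod : ∀ k, g (k % 2 ^ n) = g k := by
    intro k; rw [hg, hg, ← hN, Function.iterate_mod_minimalPeriod_eq]
  have hpos : 0 < 2 ^ n := by positivity
  refine ⟨(List.range (2 ^ n)).map (fun k => g k ⟨0, hn⟩), by simp, ?_⟩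
  intro w hw
  rw [occ_eq n hn _ w (by simp) hw]
  obtain ⟨k, hk⟩ := hsurj (fun j => w.getD j false)
  have hM : ∀ p, Match n ((List.range (2 ^ n)).map (fun k => g k ⟨0, hn⟩)) w p ↔ g p = g k := by
    intro p
    rw [hk]
    constructor
    · intro h
      funext ⟨j, hj⟩
      have := h j hj
      rw [List.getD_eq_getElem _ _ (by simpa using Nat.mod_lt _ hpos)] at this
      simp only [List.getElem_map, List.getElem_range, hmod] at this
      rw [hstep, this]
    · intro h j hj
      rw [List.getD_eq_getElem _ _ (by simpa using Nat.mod_lt _ hpos)]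
      simp only [List.getElem_map, List.getElem_range, hmod]
      rw [← hstep j hj, h]
  rw [Finset.card_eq_one]
  refine ⟨k % 2 ^ n, ?_⟩
  ext p
  simp only [Finset.mem_filter, Finset.mem_range, Finset.mem_singleton, hM]
  constructor
  · rintro ⟨h1, h2⟩
    rw [← hmod k, hg, hg] at h2
    exact Function.iterate_injOn_Iio_minimalPeriod (by simpa [hN] using h1)
      (by simpa [hN] using Nat.mod_lt _ hpos) h2
  · rintro rfl
    exact ⟨Nat.mod_lt _ hpos, hmod k⟩

theorem db_spec (n : ℕ) (hn : 1 ≤ n) : IsDeBruijn n (db n) := by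
  have h : ∃ x : List Bool, IsDeBruijn n x ∧ ∀ y, IsDeBruijn n y → x ≤ y := by
    have hfin : {x | IsDeBruijn n x}.Finite :=
      (List.finite_length_eq Bool (2 ^ n)).subset (fun x hx => hx.1)
    obtain ⟨x, hx, hm⟩ := Set.exists_min_image _ id hfin (exists_db n hn)
    exact ⟨x, hx, hm⟩
  unfold db
  rw [dif_pos h]
  exact h.choose_spec.1

theorem db_unique (n : ℕ) (hn : 1 ≤ n) (w : List Bool) (hw : w.length = n) :
    ∃ q < 2 ^ n, ∀ p, Match n (db n) w p ↔ p % 2 ^ n = q := by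
  classical
  have h := db_spec n hn
  have h1 := h.2 w hw
  rw [occ_eq n hn _ w h.1 hw, Finset.card_eq_one] at h1
  obtain ⟨q, hq⟩ := h1
  have hq' : ∀ p, (p < 2 ^ n ∧ Match n (db n) w p) ↔ p = q := by
    intro p
    have := Finset.ext_iff.1 hq p
    simpa using this
  refine ⟨q, ((hq' q).2 rfl).1, fun p => ?_⟩
  rw [← hq']
  have : Match n (db n) w (p % 2 ^ n) ↔ Match n (db n) w p := by
    unfold Match; simp
  rw [this]
  simp [Nat.mod_lt]

theorem flatten_getD (N t : ℕ) (x : List Bool) (hx : x.length = N) : ∀ m < t * N,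
    ((List.replicate t x).flatten).getD m false = x.getD (m % N) false := by
  induction t with
  | zero => intro m hm; omega
  | succ t ih =>
    intro m hm
    rw [List.replicate_succ, List.flatten_cons]
    by_cases h : m < N
    · rw [List.getD_append _ _ _ _ (by omega), Nat.mod_eq_of_lt h]
    · rw [List.getD_append_right _ _ _ _ (by omega), hx, ih _ (by rw [Nat.succ_mul] at hm; omega),
        Nat.mod_eq_sub_mod (by omega : m ≥ N)]

theorem rotate_getD (N i m : ℕ) (x : List Bool) (hx : x.length = N) (hm : m < N) :
    (x.rotate i).getD m false = x.getD ((i + m) % N) false := by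
  rw [List.getD_eq_getElem _ _ (by simpa [hx] using hm),
    List.getD_eq_getElem _ _ (by rw [hx]; exact Nat.mod_lt _ (by omega)), List.getElem_rotate]
  simp only [hx, Nat.add_comm]

theorem bblk_getD (n t i m : ℕ) (hn : 1 ≤ n) (hm : m < t * 2 ^ n) :
    (Bblk n t i).getD m false = (db n).getD ((i + m) % 2 ^ n) false := by
  have hl := (db_spec n hn).1
  unfold Bblk
  rw [flatten_getD (2 ^ n) t _ (by simpa using hl) m hm,
    rotate_getD (2 ^ n) i _ _ hl (Nat.mod_lt _ (by positivity))]
  simp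

open Classical in
theorem occB_eq (n t i : ℕ) (hn : 1 ≤ n) (w : List Bool) (hw : w.length = n) :
    occB w (Bblk n t i) = ((Finset.range (t * 2 ^ n + 1 - n)).filter
      (fun m => m % n = 0 ∧ Match n (db n) w (i + m))).card := by
  have hl : (Bblk n t i).length = t * 2 ^ n := by
    simp [Bblk, (db_spec n hn).1]
  unfold occB
  rw [hl, hw]
  have : ((Finset.range (t * 2 ^ n + 1 - n)).filter
      (fun m => m % n = 0 ∧ Match n (db n) w (i + m))).card =
    ((List.range (t * 2 ^ n + 1 - n)).filter
      (fun m => decide (m % n = 0 ∧ Match n (db n) w (i + m)))).length := rfl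
  rw [this]
  congr 1
  apply List.filter_congr
  intro p hpm
  rw [List.mem_range] at hpm
  rw [Bool.decide_and]
  congr 1
  rw [decide_eq_decide]
  have := take_drop_iff n p (Bblk n t i) w hw (by omega)
  rw [hw] at this
  rw [this]
  apply forall₂_congr
  intro j hj
  rw [bblk_getD n t i _ hn (by omega), Nat.add_assoc]

theorem count_main (n s t i q : ℕ) (hn : 1 ≤ n) (ht : Odd t) (hfact : n = 2 ^ s * t)
    (hi : i < 2 ^ s) (hq : q < 2 ^ n) (w : List Bool) (hw : w.length = n)
    (h : ∀ p, Match n (db n) w p ↔ p % 2 ^ n = q) :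
    occB w (Bblk n t i) = if q % 2 ^ s = i then 1 else 0 := by
  classical
  rw [occB_eq n t i hn w hw]
  simp only [h]
  have hsn : s ≤ n := by
    have h1 := lt_pow s
    have : 2 ^ s ≤ n := by rw [hfact]; exact Nat.le_mul_of_pos_right _ ht.pos
    omega
  obtain ⟨d, hd⟩ : ∃ d, n = s + d := ⟨n - s, by omega⟩
  have hN : 2 ^ n = 2 ^ s * 2 ^ d := by conv_lhs => rw [hd, pow_add]
  have hS : 0 < 2 ^ s := by positivity
  have hD : 0 < 2 ^ d := by positivity
  have htN : t * 2 ^ n = n * 2 ^ d := by rw [hN]; conv_rhs => rw [hfact]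
                                         ring
  have hmodk : ∀ k, (i + n * k) % 2 ^ n = i + 2 ^ s * ((t * k) % 2 ^ d) := by
    intro k
    rw [hN, Nat.mod_mul, hfact, Nat.mul_assoc, Nat.add_mul_mod_self_left,
      Nat.add_mul_div_left _ _ hS, Nat.mod_eq_of_lt hi, Nat.div_eq_of_lt hi, Nat.zero_add]
  have hcop : Nat.Coprime (2 ^ d) t := Nat.Coprime.pow_left _ (Nat.coprime_two_left.2 ht)
  split_ifs with hqi
  · rw [Finset.card_eq_one]
    -- existence of k
    have hr : q = i + 2 ^ s * (q / 2 ^ s) := by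
      rw [← hqi]; exact (Nat.mod_add_div q (2 ^ s)).symm
    have hrlt : q / 2 ^ s < 2 ^ d := by
      apply Nat.div_lt_of_lt_mul; rw [← hN]; exact hq
    obtain ⟨u, -, hu⟩ := Nat.exists_mul_mod_eq_of_coprime (q / 2 ^ s) hcop.symm hD.ne'
    rw [Nat.mod_eq_of_lt hrlt] at hu
    have hk : u % 2 ^ d < 2 ^ d := Nat.mod_lt _ hD
    refine ⟨n * (u % 2 ^ d), ?_⟩
    ext m
    simp only [Finset.mem_filter, Finset.mem_range, Finset.mem_singleton, htN]
    constructor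
    · rintro ⟨h1, h2, h3⟩
      obtain ⟨k, rfl⟩ := Nat.dvd_of_mod_eq_zero h2
      rw [hmodk, hr] at h3
      have h4 : (t * k) % 2 ^ d = q / 2 ^ s := by
        have := Nat.add_left_cancel h3
        have := Nat.eq_of_mul_eq_mul_left hS this
        rw [this]
      have hkl : k < 2 ^ d := by
        by_contra hcon
        have := Nat.mul_le_mul_left n (not_lt.1 hcon)
        omega
      have h5 : t * k ≡ t * u [MOD 2 ^ d] := by unfold Nat.ModEq; rw [h4, hu]
      have h6 : k ≡ u [MOD 2 ^ d] := Nat.ModEq.cancel_left_of_coprime hcop h5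
      rw [← h6, Nat.mod_eq_of_lt hkl]
    · rintro rfl
      refine ⟨?_, by simp, ?_⟩
      · have := Nat.mul_le_mul_left n (show u % 2 ^ d + 1 ≤ 2 ^ d from hk)
        rw [Nat.mul_add] at this
        omega
      · rw [hmodk]
        simp only [Nat.mul_mod_mod, hu]
        exact hr.symm
  · rw [Finset.card_eq_zero, Finset.filter_eq_empty_iff]
    rintro m - ⟨h2, h3⟩
    obtain ⟨k, rfl⟩ := Nat.dvd_of_mod_eq_zero h2
    rw [hmodk] at h3
    apply hqi
    rw [← h3, Nat.add_mul_mod_self_left, Nat.mod_eq_of_lt hi]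

end DB

/-- Let `n = 2^s * t` with `t` odd, `n ≥ 1`. Every `w` of length `n` occurs as an aligned
block of exactly one block `B_{n,i}` (`i < 2^s`), exactly once there and zero times in the
others; consequently each block contains exactly `2^{n-s}` distinct strings of length `n`
as aligned blocks, each exactly once. -/
theorem stmt4 (n s t : ℕ) (hn : 1 ≤ n) (ht : Odd t) (hfact : n = 2 ^ s * t) :
    (∀ w : List Bool, w.length = n →
      ∃ i, i < 2 ^ s ∧ occB w (Bblk n t i) = 1 ∧
        ∀ j, j < 2 ^ s → j ≠ i → occB w (Bblk n t j) = 0) ∧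
    (∀ i, i < 2 ^ s →
      {w : List Bool | w.length = n ∧ occB w (Bblk n t i) = 1}.ncard = 2 ^ (n - s)) := by
  have hS : 0 < 2 ^ s := by positivity
  constructor
  · intro w hw
    obtain ⟨q, hq, h⟩ := DB.db_unique n hn w hw
    have hi := Nat.mod_lt q hS
    refine ⟨q % 2 ^ s, hi, ?_, ?_⟩
    · rw [DB.count_main n s t _ q hn ht hfact hi hq w hw h, if_pos rfl]
    · intro j hj hne
      rw [DB.count_main n s t _ q hn ht hfact hj hq w hw h, if_neg (Ne.symm hne)]
  · intro i hi
    have hsn : s ≤ n := by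
      have h1 := DB.lt_pow s
      have : 2 ^ s ≤ n := by rw [hfact]; exact Nat.le_mul_of_pos_right _ ht.pos
      omega
    have hN : 2 ^ n = 2 ^ s * 2 ^ (n - s) := by rw [← pow_add]; congr 1; omega
    let win : ℕ → List Bool := fun p => (List.range n).map (fun j => (db n).getD ((p + j) % 2 ^ n) false)
    have hwl : ∀ p, (win p).length = n := by intro p; simp [win]
    have hwm : ∀ p, DB.Match n (db n) (win p) p := by
      intro p j hj
      simp only [win]
      rw [List.getD_eq_getElem (List.map _ _) _ (by simpa using hj)]
      simp
    have hlt : ∀ k < 2 ^ (n - s), i + 2 ^ s * k < 2 ^ n := by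
      intro k hk
      have := Nat.mul_le_mul_left (2 ^ s) (show k + 1 ≤ 2 ^ (n - s) from hk)
      rw [Nat.mul_add] at this
      omega
    have hset : {w : List Bool | w.length = n ∧ occB w (Bblk n t i) = 1} =
        Set.image (fun k => win (i + 2 ^ s * k)) (Finset.range (2 ^ (n - s)) : Set ℕ) := by
      ext w
      simp only [Set.mem_setOf_eq, Set.mem_image, Finset.coe_range, Set.mem_Iio]
      constructor
      · rintro ⟨hw, ho⟩
        obtain ⟨q, hq, h⟩ := DB.db_unique n hn w hw
        rw [DB.count_main n s t _ q hn ht hfact hi hq w hw h] at ho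
        have hqi : q % 2 ^ s = i := by
          by_contra hcon
          rw [if_neg hcon] at ho
          omega
        refine ⟨q / 2 ^ s, ?_, ?_⟩
        · apply Nat.div_lt_of_lt_mul; rw [← hN]; exact hq
        · rw [← hqi, Nat.mod_add_div]
          have hm := (h q).2 (Nat.mod_eq_of_lt hq)
          apply List.ext_getElem
          · rw [hwl, hw]
          · intro j h1 h2
            have h3 := hwm q j (by omega)
            rw [hm j (by omega), List.getD_eq_getElem _ _ h2, List.getD_eq_getElem _ _ h1] at h3
            exact h3.symm
      · rintro ⟨k, hk, rfl⟩
        refine ⟨hwl _, ?_⟩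
        obtain ⟨q, hq, h⟩ := DB.db_unique n hn _ (hwl (i + 2 ^ s * k))
        rw [DB.count_main n s t _ q hn ht hfact hi hq _ (hwl _) h, if_pos]
        rw [← (h _).1 (hwm _), Nat.mod_eq_of_lt (hlt k hk), Nat.add_mul_mod_self_left,
          Nat.mod_eq_of_lt hi]
    rw [hset, Set.ncard_image_of_injOn, Set.ncard_coe_finset, Finset.card_range]
    intro a ha b hb hab
    simp only [Finset.coe_range, Set.mem_Iio] at ha hb
    obtain ⟨q, hq, h⟩ := DB.db_unique n hn _ (hwl (i + 2 ^ s * a))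
    have h1 := (h _).1 (hwm _)
    have h2 := (h (i + 2 ^ s * b)).1 (by simp only at hab; rw [hab]; exact hwm _)
    rw [Nat.mod_eq_of_lt (hlt _ ha)] at h1
    rw [Nat.mod_eq_of_lt (hlt _ hb)] at h2
    exact Nat.eq_of_mul_eq_mul_left hS (by omega)
end

section
/- Let x be a de Bruijn string of order n and let w be a binary string with |w| ≥ n. In the infinite periodic sequence x^ω (x repeated forever), any two occurrences of w start at positions that are congruent modulo 2^n. Consequently, every occurrence of w in x^ω is followed by the same bit. -/
/-- `w` occurs at position `p` of the infinite sequence `f`. -/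
def occursAtSeq (w : List Bool) (f : ℕ → Bool) (p : ℕ) : Prop :=
  ∀ k, k < w.length → f (p + k) = w.getD k false

theorem stmt6_aux (n : ℕ) (hn : 1 ≤ n) (x : List Bool) (hl : x.length = 2 ^ n) (w : List Bool)
    (hw : n ≤ w.length) (p : ℕ)
    (hp : occursAtSeq w (fun i => x.getD (i % x.length) false) p) :
    p % 2 ^ n ∈ ((List.range ((x ++ x.take (n - 1)).length + 1 - (w.take n).length)).filter
    (fun i => decide (((x ++ x.take (n - 1)).drop i).take (w.take n).length = w.take n))) := by
  have h2 : n < 2 ^ n := Nat.lt_two_pow_self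
  have hP : p % 2 ^ n < 2 ^ n := Nat.mod_lt _ (by omega)
  have hwl : (w.take n).length = n := by simp [hw]
  have hyl : (x ++ x.take (n - 1)).length = 2 ^ n + (n - 1) := by
    simp [hl]; omega
  rw [List.mem_filter, List.mem_range, decide_eq_true_eq, hwl, hyl]
  refine ⟨by omega, ?_⟩
  apply List.ext_getElem
  · rw [List.length_take, List.length_drop, hyl, hwl]; omega
  · intro k hk hk'
    have hkn : k < n := by omega
    have h := hp k (by omega)
    simp only [hl] at h
    have hm : (p + k) % 2 ^ n = (p % 2 ^ n + k) % 2 ^ n := by simp [Nat.add_mod]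
    rw [hm] at h
    rw [List.getElem_take, List.getElem_drop, List.getElem_take]
    rw [List.getD_eq_getElem _ _ (by rw [hl]; exact Nat.mod_lt _ (by omega)),
      List.getD_eq_getElem _ _ (by omega)] at h
    rw [← h, List.getElem_append]
    split
    · rename_i hlt
      congr 1
      exact (Nat.mod_eq_of_lt (by omega)).symm
    · rename_i hlt
      rw [List.getElem_take]
      congr 1
      have e : (p % 2 ^ n + k) % 2 ^ n = p % 2 ^ n + k - 2 ^ n :=
        (Nat.mod_eq_sub_mod (by omega)).trans (Nat.mod_eq_of_lt (by omega))
      rw [e, hl]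

/-- If `x` is a de Bruijn string of order `n` and `|w| ≥ n`, then any two occurrences of
`w` in the periodic sequence `x^ω` start at positions congruent mod `2^n`; consequently
every occurrence of `w` in `x^ω` is followed by the same bit. -/
theorem stmt6 (n : ℕ) (x : List Bool) (hx : IsDeBruijn n x) (w : List Bool)
    (hw : n ≤ w.length) (p q : ℕ)
    (hp : occursAtSeq w (fun i => x.getD (i % x.length) false) p)
    (hq : occursAtSeq w (fun i => x.getD (i % x.length) false) q) :
    p % 2 ^ n = q % 2 ^ n ∧
      x.getD ((p + w.length) % x.length) false
        = x.getD ((q + w.length) % x.length) false := by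
  have hmod : p % 2 ^ n = q % 2 ^ n := by
    rcases Nat.eq_zero_or_pos n with h0 | hn
    · subst h0; simp [Nat.mod_one]
    · have h1 := stmt6_aux n hn x hx.1 w hw p hp
      have h2 := stmt6_aux n hn x hx.1 w hw q hq
      have h3 := hx.2 (w.take n) (by simp [hw])
      unfold occ at h3
      obtain ⟨a, ha⟩ := List.length_eq_one_iff.mp h3
      rw [ha, List.mem_singleton] at h1 h2
      rw [h1, h2]
  refine ⟨hmod, ?_⟩
  rw [hx.1, Nat.add_mod p, Nat.add_mod q, hmod]
end

section
/- For all sufficiently large n, the string 0 · 1 · 0^{n−2} · 1 does not occur as a substring of the finite string S_1 S_2 ··· S_{n−1}. -/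
theorem exists_greedy (p : ℕ) : ∃ G : ℕ → Bool, (∀ k ≤ p, G k = true) ∧
    ∀ i ≥ 1, (G (i+p) = true ↔ ∃ i' < i, (∀ j < p, G (i'+j) = G (i+j)) ∧ G (i'+p) = false) := by
  classical
  let F : (k : ℕ) → ((i : ℕ) → i < k → Bool) → Bool := fun k prev =>
    let f : ℕ → Bool := fun i => if h : i < k then prev i h else true
    if k ≤ p then true else
      decide (∃ i' < k - p, (∀ j < p, f (i'+j) = f (k - p + j)) ∧ f (i'+p) = false)
  let G : ℕ → Bool := WellFounded.fix (Nat.lt_wfRel.wf) F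
  have hG : ∀ k, G k = F k (fun i _ => G i) := fun k => WellFounded.fix_eq _ F k
  refine ⟨G, ?_, ?_⟩
  · intro k hk
    rw [hG]; simp [F, hk]
  · intro i hi
    rw [hG]
    have h1 : ¬ (i + p ≤ p) := by omega
    simp only [F, h1, if_false, decide_eq_true_eq, Nat.add_sub_cancel]
    apply exists_congr
    intro i'
    apply and_congr_right
    intro hi'
    have e : ∀ j < i + p, (if h : j < i + p then G j else true) = G j := by
      intro j hj; simp [hj]
    apply and_congr
    · apply forall_congr'
      intro j
      apply imp_congr_right
      intro hj
      rw [e _ (by omega), e _ (by omega)]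
    · rw [e _ (by omega)]

theorem greedy_full (p : ℕ) (G : ℕ → Bool) (h0 : ∀ k ≤ p, G k = true)
    (hs : ∀ i ≥ 1, (G (i+p) = true ↔ ∃ i' < i, (∀ j < p, G (i'+j) = G (i+j)) ∧ G (i'+p) = false)) :
    (∀ j ≤ p, G (2^(p+1) + j) = true) ∧
    (∀ a < 2^(p+1), ∀ b < 2^(p+1), (∀ j < p+1, G (a+j) = G (b+j)) → a = b) ∧
    (∀ w : ℕ → Bool, ∃ i < 2^(p+1), ∀ j < p+1, G (i+j) = w j) := by
  classical
  obtain ⟨W, hWd⟩ : ∃ W : ℕ → (Fin (p+1) → Bool), ∀ i j, W i j = G (i+j) :=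
    ⟨fun i j => G (i+j), fun _ _ => rfl⟩
  have hW : ∀ a b, W a = W b ↔ ∀ j < p+1, G (a+j) = G (b+j) := by
    intro a b
    constructor
    · intro h j hj; have := congrFun h ⟨j, hj⟩; simpa [hWd] using this
    · intro h; funext j; rw [hWd, hWd]; exact h j j.2
  have hex : ∃ t, ∃ i < t, W i = W t := by
    obtain ⟨a, b, hab, h⟩ := Finite.exists_ne_map_eq_of_infinite W
    rcases lt_or_gt_of_ne hab with h1 | h1
    · exact ⟨b, a, h1, h⟩
    · exact ⟨a, b, h1, h.symm⟩
  obtain ⟨T, hT⟩ : ∃ T, T = Nat.find hex := ⟨_, rfl⟩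
  have hrep : ∃ i < T, W i = W T := hT ▸ Nat.find_spec hex
  have hinj : ∀ a < T, ∀ b < T, W a = W b → a = b := by
    have key : ∀ a b, a < b → b < T → W a ≠ W b := by
      intro a b hab hb h
      exact Nat.find_min hex (hT ▸ hb) ⟨a, hab, h⟩
    intro a ha b hb h
    rcases lt_trichotomy a b with h1 | h1 | h1
    · exact (key a b h1 hb h).elim
    · exact h1
    · exact (key b a h1 ha h.symm).elim
  obtain ⟨i1, hi1, hw1⟩ := hrep
  rw [hW] at hw1
  have hT1 : 1 ≤ T := by omega
  have hTp : G (T + p) = true := by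
    by_contra hc
    apply hc
    rw [hs T hT1]
    refine ⟨i1, hi1, fun j hj => hw1 j (by omega), ?_⟩
    rw [hw1 p (by omega)]; simpa using hc
  obtain ⟨i2, hi2, hv2, he2⟩ := (hs T hT1).1 hTp
  have he1 : G (i1 + p) = true := by rw [hw1 p (by omega), hTp]
  have h12 : i1 ≠ i2 := by
    rintro rfl
    rw [he1] at he2; cases he2
  -- windows with given tail
  have htail : ∀ a b, a < T → b < T → a ≠ b → (∀ j < p, G (a+1+j) = G (b+1+j)) → G a ≠ G b := by
    intro a b ha hb hab h hc
    apply hab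
    apply hinj a ha b hb
    rw [hW]
    intro j hj
    rcases j with _ | j
    · exact hc
    · have := h j (by omega)
      rw [show a + (j+1) = a+1+j by ring, show b + (j+1) = b+1+j by ring]; exact this
  have hVT : ∀ j < p, G (T + j) = true := by
    by_cases hi10 : i1 = 0
    · intro j hj
      rw [← hw1 j (by omega), hi10]; exact h0 _ (by omega)
    by_cases hi20 : i2 = 0
    · intro j hj
      rw [← hv2 j (by omega), hi20]; exact h0 _ (by omega)
    exfalso
    have a1 := htail (i1-1) (i2-1) (by omega) (by omega) (by omega) (by
      intro j hj
      rw [show i1 - 1 + 1 = i1 by omega, show i2 - 1 + 1 = i2 by omega, hw1 j (by omega), hv2 j hj])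
    have a2 := htail (i1-1) (T-1) (by omega) (by omega) (by omega) (by
      intro j hj
      rw [show i1 - 1 + 1 = i1 by omega, show T - 1 + 1 = T by omega, hw1 j (by omega)])
    have a3 := htail (i2-1) (T-1) (by omega) (by omega) (by omega) (by
      intro j hj
      rw [show i2 - 1 + 1 = i2 by omega, show T - 1 + 1 = T by omega, hv2 j (by omega)])
    revert a1 a2 a3
    cases G (i1-1) <;> cases G (i2-1) <;> cases G (T-1) <;> simp
  have full : ∀ r ≤ p, ∀ v : ℕ → Bool, (∀ j ≥ r, v j = true) → 
      (∃ a < T, (∀ j < p, G (a+j) = v j) ∧ G (a+p) = false) ∧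
      (∃ a < T, (∀ j < p, G (a+j) = v j) ∧ G (a+p) = true) := by
    intro r
    induction r with
    | zero =>
      intro _ v hv
      refine ⟨⟨i2, hi2, fun j hj => ?_, he2⟩, ⟨i1, hi1, fun j hj => ?_, he1⟩⟩
      · rw [hv2 j hj, hVT j hj, hv j (by omega)]
      · rw [hw1 j (by omega), hVT j hj, hv j (by omega)]
    | succ r ih =>
      intro hr v hv
      obtain ⟨⟨a, ha, hav, hae⟩, ⟨b, hb, hbv, hbe⟩⟩ := ih (by omega) (fun j => v (j+1)) (fun j hj => hv _ (by omega))
      have hab : a ≠ b := by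
        rintro rfl
        rw [hae] at hbe; cases hbe
      -- shift
      have sh : ∀ a < T, (∀ j < p, G (a+j) = v (j+1)) → ∃ a' < T, (a = 0 ∧ a' + 1 = T ∨ a = a' + 1) ∧ ∀ j < p, G (a'+1+j) = v (j+1) := by
        intro a ha hav
        rcases a with _ | a
        · refine ⟨T-1, by omega, Or.inl ⟨rfl, by omega⟩, ?_⟩
          intro j hj
          rw [← hav j hj, show T - 1 + 1 = T by omega, hVT j hj, h0 _ (by omega)]
        · exact ⟨a, by omega, Or.inr rfl, hav⟩
      obtain ⟨a', ha', hr1, hav'⟩ := sh a ha hav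
      obtain ⟨b', hb', hr2, hbv'⟩ := sh b hb hbv
      have hne := htail a' b' ha' hb' (by omega) (fun j hj => by rw [hav' j hj, hbv' j hj])
      have hc : ∃ c < T, G c = v 0 ∧ ∀ j < p, G (c+1+j) = v (j+1) := by
        by_cases h : G a' = v 0
        · exact ⟨a', ha', h, hav'⟩
        · refine ⟨b', hb', ?_, hbv'⟩
          revert h hne
          cases G a' <;> cases G b' <;> cases v 0 <;> simp
      obtain ⟨c, hc, hc0, hcv⟩ := hc
      have hcall : ∀ j < p+1, G (c+j) = v j := by
        intro j hj
        rcases j with _ | j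
        · exact hc0
        · rw [← hcv j (by omega)]; congr 1; ring
      have hcp : G (c+p) = true := by rw [hcall p (by omega), hv p (by omega)]
      refine ⟨?_, ⟨c, hc, fun j hj => hcall j (by omega), hcp⟩⟩
      by_cases hc1 : c = 0
      · refine ⟨i2, hi2, fun j hj => ?_, he2⟩
        rw [hv2 j hj, hVT j hj, ← hcall j (by omega), hc1, h0 _ (by omega)]
      · obtain ⟨d, hd, hdv, hde⟩ := (hs c (by omega)).1 hcp
        exact ⟨d, by omega, fun j hj => by rw [hdv j hj, hcall j (by omega)], hde⟩
  have hall : ∀ w : ℕ → Bool, ∃ i < T, ∀ j < p+1, G (i+j) = w j := by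
    intro w
    obtain ⟨⟨a, ha, hav, hae⟩, ⟨b, hb, hbv, hbe⟩⟩ := full p le_rfl (fun j => if j < p then w j else true) (by
      intro j hj; simp; omega)
    by_cases hw : w p = true
    · refine ⟨b, hb, fun j hj => ?_⟩
      by_cases hj' : j < p
      · rw [hbv j hj']; simp [hj']
      · have : j = p := by omega
        subst this; rw [hbe, hw]
    · refine ⟨a, ha, fun j hj => ?_⟩
      by_cases hj' : j < p
      · rw [hav j hj']; simp [hj']
      · have : j = p := by omega
        subst this; rw [hae]; symm; simpa using hw
  have hcard : T = 2^(p+1) := by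
    have hb : Function.Bijective (fun i : Fin T => W i) := by
      constructor
      · intro a b h; exact Fin.ext (hinj a a.2 b b.2 h)
      · intro w
        obtain ⟨i, hi, h⟩ := hall (fun j => if hj : j < p+1 then w ⟨j, hj⟩ else true)
        refine ⟨⟨i, hi⟩, ?_⟩
        funext j
        simp only [hWd]
        rw [h j j.2, dif_pos j.2]
    have := Fintype.card_of_bijective hb
    simpa using this
  subst hcard
  refine ⟨?_, fun a ha b hb h => hinj a ha b hb ((hW a b).2 h), hall⟩
  intro j hj
  rcases Nat.lt_or_eq_of_le hj with h | h
  · exact hVT j h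
  · rw [h, hTp]

theorem greedy_zero (p : ℕ) (G : ℕ → Bool) (h0 : ∀ k ≤ p, G k = true)
    (hs : ∀ i ≥ 1, (G (i+p) = true ↔ ∃ i' < i, (∀ j < p, G (i'+j) = G (i+j)) ∧ G (i'+p) = false)) :
    ∀ j ≤ p, G (p+1+j) = false := by
  intro j
  induction j using Nat.strong_induction_on with
  | _ j ih =>
    intro hj
    by_contra hc
    have hc : G (j+1+p) = true := by
      rw [show j+1+p = p+1+j by ring]; simpa using hc
    obtain ⟨i', hi', hv, he⟩ := (hs (j+1) (by omega)).1 hc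
    have h1 : i' ≠ 0 := by
      rintro rfl
      rw [h0 _ (by omega)] at he; cases he
    have h2 := hv (p - i') (by omega)
    rw [show i' + (p-i') = p by omega, h0 p le_rfl, show j + 1 + (p - i') = p + 1 + (j - i') by omega,
      ih (j-i') (by omega) (by omega)] at h2
    cases h2

theorem greedy_res (p : ℕ) (G : ℕ → Bool) (h0 : ∀ k ≤ p, G k = true)
    (hs : ∀ i ≥ 1, (G (i+p) = true ↔ ∃ i' < i, (∀ j < p, G (i'+j) = G (i+j)) ∧ G (i'+p) = false))
    (hz : ∀ j ≤ p, G (p+1+j) = false) (t i : ℕ) (ht : p+1 ≤ t) (hi : 1 ≤ i) (hip : i ≤ p)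
    (hr : ∀ l < p, G (t+l) = decide (l < i)) : G (t+p) = true := by
  rw [hs t (by omega)]
  refine ⟨p+1-i, by omega, ?_, ?_⟩
  · intro l hl
    rw [hr l hl]
    by_cases h : l < i
    · rw [h0 _ (by omega)]; simp [h]
    · rw [show p + 1 - i + l = p + 1 + (l - i) by omega, hz _ (by omega)]; simp [h]
  · rw [show p + 1 - i + p = p + 1 + (p - i) by omega, hz _ (by omega)]

theorem greedy_small (p : ℕ) (G : ℕ → Bool) (h0 : ∀ k ≤ p, G k = true)
    (hz : ∀ j ≤ p, G (p+1+j) = false) (s : ℕ) (hs : s ≤ p) (he : G (s+p) = false) :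
    1 ≤ s ∧ ∀ l < p, G (s+l) = decide (l < p+1-s) := by
  have h1 : 1 ≤ s := by
    rcases s with _ | s
    · rw [h0 _ (by omega)] at he; cases he
    · omega
  refine ⟨h1, fun l hl => ?_⟩
  by_cases h : l < p + 1 - s
  · rw [h0 _ (by omega)]; simp [h]
  · rw [show s + l = p + 1 + (s + l - (p+1)) by omega, hz _ (by omega)]; simp [h]

theorem greedy_nonres (p : ℕ) (G : ℕ → Bool) (h0 : ∀ k ≤ p, G k = true)
    (hs : ∀ i ≥ 1, (G (i+p) = true ↔ ∃ i' < i, (∀ j < p, G (i'+j) = G (i+j)) ∧ G (i'+p) = false))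
    (hz : ∀ j ≤ p, G (p+1+j) = false) (t : ℕ) (ht : p+1 ≤ t)
    (hr : ¬ ∃ i, 1 ≤ i ∧ i ≤ p ∧ ∀ l < p, G (t+l) = decide (l < i)) :
    ∃ s ≤ t, p+1 ≤ s ∧ (∀ l < p, G (s+l) = G (t+l)) ∧ G (s+p) = false := by
  by_cases h : G (t+p) = true
  · obtain ⟨s, hst, hv, he⟩ := (hs t (by omega)).1 h
    by_cases hsp : p + 1 ≤ s
    · exact ⟨s, by omega, hsp, hv, he⟩
    · exfalso
      apply hr
      obtain ⟨h1, h2⟩ := greedy_small p G h0 hz s (by omega) he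
      exact ⟨p+1-s, by omega, by omega, fun l hl => by rw [← hv l hl, h2 l hl]⟩
  · exact ⟨t, le_rfl, ht, fun _ _ => rfl, by simpa using h⟩

theorem greedy_order (p : ℕ) (G : ℕ → Bool) (h0 : ∀ k ≤ p, G k = true)
    (hs : ∀ i ≥ 1, (G (i+p) = true ↔ ∃ i' < i, (∀ j < p, G (i'+j) = G (i+j)) ∧ G (i'+p) = false))
    (hz : ∀ j ≤ p, G (p+1+j) = false) (T : ℕ)
    (hinj : ∀ a < T, ∀ b < T, (∀ j < p+1, G (a+j) = G (b+j)) → a = b) :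
    ∀ t, p+1 ≤ t → t ≤ T → ∀ j ≤ p, (∀ l < p, G (t+l) = decide (l < j)) →
      ∀ i < j, ∃ t', p+1 ≤ t' ∧ t' < t ∧ ∀ l < p, G (t'+l) = decide (l < i) := by
  intro t
  induction t using Nat.strong_induction_on with
  | _ t ih =>
    intro ht htT j hj hr i hij
    have htrue : ∀ l < j, G (t+l) = true := by
      intro l hl; rw [hr l (by omega)]; simp [hl]
    by_cases hj2 : j = 1
    · subst hj2
      have hi0 : i = 0 := by omega
      subst hi0
      refine ⟨p+1, le_rfl, ?_, fun l hl => by rw [hz l (by omega)]; simp⟩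
      rcases Nat.lt_or_eq_of_le ht with h | h
      · exact h
      · have := htrue 0 (by omega)
        rw [← h, hz 0 (by omega)] at this; cases this
    have hj2 : 2 ≤ j := by omega
    obtain ⟨u, hu⟩ : ∃ u, u + 1 + (p - j) = t := ⟨t - 1 - (p-j), by omega⟩
    have hup : G (u+p) = true := by
      rw [show u + p = t + (j-1) by omega]; exact htrue _ (by omega)
    have hup1 : G (u+(p-1)) = true := by
      rw [show u + (p-1) = t + (j-2) by omega]; exact htrue _ (by omega)
    obtain ⟨u', hu', hv, he⟩ := (hs u (by omega)).1 hup
    have hu'p : p + 1 ≤ u' := by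
      by_contra hc
      obtain ⟨h1, h2⟩ := greedy_small p G h0 hz u' (by omega) he
      have h3 := h2 (p-1) (by omega)
      rw [hv _ (by omega), hup1] at h3
      have h4 : p - 1 < p + 1 - u' := by simpa using h3.symm
      have h5 : u' = 1 := by omega
      subst h5
      have : 0 = u := by
        apply hinj 0 (by omega) u (by omega)
        intro l hl
        rw [h0 _ (by omega)]
        by_cases hlp : l < p
        · rw [← hv l hlp, h0 _ (by omega)]
        · rw [show l = p by omega, hup]
      omega
    have chain : ∀ r, 1 ≤ r → r ≤ p - j + 1 →
        (∃ s, p+1 ≤ s ∧ s ≤ u' + r ∧ ∃ a, j - 1 ≤ a ∧ a ≤ p ∧ ∀ l < p, G (s+l) = decide (l < a)) ∨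
        (∃ s, p+1 ≤ s ∧ s ≤ u' + r ∧ (∀ l < p - r, G (s+l) = G (u+r+l)) ∧
          ∀ l < p, p - r ≤ l → G (s+l) = false) := by
      intro r hr1
      induction r, hr1 using Nat.le_induction with
      | base =>
        intro _
        refine Or.inr ⟨u'+1, by omega, le_rfl, ?_, ?_⟩
        · intro l hl
          rw [show u'+1+l = u'+(l+1) by ring, hv _ (by omega)]; congr 1; ring
        · intro l hl hl2
          rw [show u'+1+l = u'+p by omega, he]
      | succ r hr1 ih2 =>
        intro hrj
        have ih3 := ih2 (by omega)
        clear ih2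
        rcases ih3 with ⟨s, a1, a2, a3⟩ | ⟨s, a1, a2, a3, a4⟩
        · exact Or.inl ⟨s, a1, by omega, a3⟩
        · by_cases hres : ∃ i, 1 ≤ i ∧ i ≤ p ∧ ∀ l < p, G (s+l) = decide (l < i)
          · obtain ⟨a, b1, b2, b3⟩ := hres
            refine Or.inl ⟨s, a1, by omega, a, ?_, b2, b3⟩
            have c1 := b3 (p-r-1) (by omega)
            rw [a3 _ (by omega), show u + r + (p - r - 1) = u + (p-1) by omega, hup1] at c1
            have : p - r - 1 < a := by simpa using c1.symm
            omega
          · obtain ⟨s', b1, b2, b3, b4⟩ := greedy_nonres p G h0 hs hz s a1 hres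
            refine Or.inr ⟨s'+1, by omega, by omega, ?_, ?_⟩
            · intro l hl
              rw [show s'+1+l = s'+(l+1) by ring, b3 _ (by omega), a3 _ (by omega)]; congr 1; ring
            · intro l hl hl2
              by_cases hlp : l + 1 < p
              · rw [show s'+1+l = s'+(l+1) by ring, b3 _ (by omega), a4 _ (by omega) (by omega)]
              · rw [show s'+1+l = s'+p by omega, b4]
    have fin : ∃ s, p+1 ≤ s ∧ s ≤ u' + (p-j+1) ∧ ∃ a, j - 1 ≤ a ∧ a ≤ p ∧ ∀ l < p, G (s+l) = decide (l < a) := by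
      rcases chain (p-j+1) (by omega) le_rfl with h | ⟨s, a1, a2, a3, a4⟩
      · exact h
      · refine ⟨s, a1, a2, j-1, le_rfl, by omega, ?_⟩
        intro l hl
        by_cases hlj : l < j - 1
        · rw [a3 l (by omega), show u + (p-j+1) + l = t + l by omega, htrue l (by omega)]; simp [hlj]
        · rw [a4 l hl (by omega)]; simp [hlj]
    obtain ⟨s, a1, a2, a, a3, a4, a5⟩ := fin
    by_cases hia : i = a
    · subst hia; exact ⟨s, a1, by omega, a5⟩
    · obtain ⟨t', b1, b2, b3⟩ := ih s (by omega) a1 (by omega) a a4 a5 i (by omega)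
      exact ⟨t', b1, by omega, b3⟩

theorem greedy_least (p : ℕ) (G : ℕ → Bool) (h0 : ∀ k ≤ p, G k = true)
    (hs : ∀ i ≥ 1, (G (i+p) = true ↔ ∃ i' < i, (∀ j < p, G (i'+j) = G (i+j)) ∧ G (i'+p) = false))
    (hz : ∀ j ≤ p, G (p+1+j) = false) (T : ℕ)
    (hinj : ∀ a < T, ∀ b < T, (∀ j < p+1, G (a+j) = G (b+j)) → a = b)
    (y : ℕ → Bool) (hy : ∀ a < T, ∀ b < T, (∀ j < p+1, y (a+j) = y (b+j)) → a = b)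
    (k : ℕ) (hk : k < T) (hag : ∀ i < k, y i = G (i+(p+1))) (hyk : y k = false)
    (hGk : G (k+(p+1)) = true) : False := by
  have hkp : p + 1 ≤ k := by
    by_contra hc
    rw [add_comm, hz k (by omega)] at hGk; cases hGk
  rw [show k + (p+1) = k+1+p by ring] at hGk
  obtain ⟨i', hi', hv, he⟩ := (hs (k+1) (by omega)).1 hGk
  have hext : ∀ a < T, ∀ b < T, (∀ j < p, y (a+j) = y (b+j)) → y (a+p) = y (b+p) → a = b := by
    intro a ha b hb h1 h2
    apply hy a ha b hb
    intro j hj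
    by_cases h : j < p
    · exact h1 j h
    · rw [show j = p by omega, h2]
  by_cases hip : p + 1 ≤ i'
  · have := hext (i'-(p+1)) (by omega) (k-p) (by omega) (by
      intro l hl
      rw [hag _ (by omega), hag _ (by omega), show i' - (p+1) + l + (p+1) = i' + l by omega,
        show k - p + l + (p+1) = k + 1 + l by omega, hv l hl]) (by
      rw [show k - p + p = k by omega, hyk, hag _ (by omega),
        show i' - (p+1) + p + (p+1) = i' + p by omega, he])
    omega
  obtain ⟨h1, h2⟩ := greedy_small p G h0 hz i' (by omega) he
  obtain ⟨j, hj⟩ : ∃ j, j = p + 1 - i' := ⟨_, rfl⟩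
  rw [← hj] at h2
  have hord := greedy_order p G h0 hs hz T hinj (k+1) (by omega) (by omega) j (by omega)
    (fun l hl => by rw [← hv l hl, h2 l hl])
  have run : ∀ r ≤ j, ∀ l < p, y (k-p+r+l) = decide (l < j - r) := by
    intro r
    induction r with
    | zero =>
      intro _ l hl
      rw [hag _ (by omega), show k - p + 0 + l + (p+1) = k+1+l by omega, ← hv l hl, h2 l hl]; simp
    | succ r ih =>
      intro hr
      have ih := ih (by omega)
      have hex : y (k+r) = false := by
        by_cases hr0 : r = 0
        · subst hr0; exact hyk
        by_contra hc
        have hc : y (k+r) = true := by simpa using hc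
        obtain ⟨t', b1, b2, b3⟩ := hord (j-r) (by omega)
        have b4 := greedy_res p G h0 hs hz t' (j-r) b1 (by omega) (by omega) b3
        have := hext (t'-(p+1)) (by omega) (k-p+r) (by omega) (by
          intro l hl
          rw [ih l hl, hag _ (by omega), show t' - (p+1) + l + (p+1) = t' + l by omega, b3 l hl]) (by
          rw [show k - p + r + p = k + r by omega, hc, hag _ (by omega),
            show t' - (p+1) + p + (p+1) = t' + p by omega, b4])
        omega
      intro l hl
      by_cases hlp : l + 1 < p
      · rw [show k - p + (r+1) + l = k - p + r + (l+1) by ring, ih _ hlp]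
        congr 1
        apply propext
        omega
      · rw [show k - p + (r+1) + l = k + r by omega, hex]
        symm
        simp
        omega
  have hlast : ∀ l < p, y (k-p+j+l) = false := by
    intro l hl; rw [run j le_rfl l hl]; simp
  have hyz : ∀ l ≤ p, y l = false := by
    intro l hl
    rw [hag l (by omega), add_comm, hz l hl]
  have e01 : y (0+p) ≠ y (1+p) := by
    intro h
    have := hext 0 (by omega) 1 (by omega) (fun l hl => by rw [hyz _ (by omega), hyz _ (by omega)]) h
    omega
  have e02 : y (0+p) ≠ y (k-p+j+p) := by
    intro h
    have := hext 0 (by omega) (k-p+j) (by omega) (fun l hl => by rw [hyz _ (by omega), hlast l hl]) h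
    omega
  have e12 : y (1+p) ≠ y (k-p+j+p) := by
    intro h
    have := hext 1 (by omega) (k-p+j) (by omega) (fun l hl => by rw [hyz _ (by omega), hlast l hl]) h
    omega
  revert e01 e02 e12
  cases y (0+p) <;> cases y (1+p) <;> cases y (k-p+j+p) <;> simp

theorem filter_len_one (n : ℕ) (P : ℕ → Bool) :
    ((List.range n).filter P).length = 1 ↔ ∃! i, i < n ∧ P i = true := by
  have h : ((List.range n).filter P).length = ((Finset.range n).filter (fun i => P i = true)).card := by
    rw [← List.toFinset_card_of_nodup (List.nodup_range.filter _)]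
    congr 1
    ext a; simp
  rw [h, Finset.card_eq_one, Finset.singleton_iff_unique_mem]
  simp

theorem window_eq (p : ℕ) (x : List Bool) (hx : x.length = 2^(p+1)) (i : ℕ) (hi : i < 2^(p+1)) :
    ((x ++ x.take p).drop i).take (p+1) =
      (List.range (p+1)).map (fun j => x.getD ((i+j) % 2^(p+1)) false) := by
  have hp : p + 1 < 2^(p+1) := Nat.lt_two_pow_self
  apply List.ext_getElem
  · simp [hx]; omega
  · intro j h1 h2
    have hj : j < p+1 := by simpa using h2
    simp only [List.getElem_take, List.getElem_drop, List.getElem_map, List.getElem_range]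
    by_cases h : i + j < 2^(p+1)
    · rw [List.getElem_append_left (by omega), Nat.mod_eq_of_lt h,
        List.getD_eq_getElem _ _ (by omega)]
    · rw [List.getElem_append_right (by omega), Nat.mod_eq_sub_mod (by omega),
        Nat.mod_eq_of_lt (by omega), List.getElem_take, List.getD_eq_getElem _ _ (by omega)]
      simp [hx]

theorem isDB_iff (p : ℕ) (x : List Bool) : IsDeBruijn (p+1) x ↔ x.length = 2^(p+1) ∧
    ∀ w : ℕ → Bool, ∃! i, i < 2^(p+1) ∧ ∀ j < p+1, x.getD ((i+j) % 2^(p+1)) false = w j := by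
  have hp : p + 1 < 2^(p+1) := Nat.lt_two_pow_self
  unfold IsDeBruijn
  apply and_congr_right
  intro hx
  have key : ∀ w : List Bool, w.length = p + 1 → (occ w (x ++ x.take (p+1-1)) = 1 ↔
      ∃! i, i < 2^(p+1) ∧ ∀ j < p+1, x.getD ((i+j) % 2^(p+1)) false = w.getD j false) := by
    intro w hw
    unfold occ
    rw [filter_len_one]
    have e : (x ++ x.take (p+1-1)).length + 1 - w.length = 2^(p+1) := by
      simp [hx, hw]; omega
    rw [e]
    apply existsUnique_congr
    intro i
    apply and_congr_right
    intro hi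
    rw [decide_eq_true_eq, hw, Nat.add_sub_cancel, window_eq p x hx i hi]
    constructor
    · intro h j hj
      rw [← h]
      simp [hj]
    · intro h
      apply List.ext_getElem
      · simp [hw]
      · intro j h1 h2
        have hj : j < p + 1 := by omega
        have := h j hj
        rw [List.getD_eq_getElem w _ (by omega)] at this
        simpa using this
  constructor
  · intro h w
    have := (key ((List.range (p+1)).map w) (by simp)).1 (h _ (by simp))
    convert this using 8 with i j
    rw [List.getD_eq_getElem _ _ (by simp; omega)]
    simp
  · intro h w hw
    exact (key w hw).2 (h _)

theorem db_spec_s7 (p : ℕ) : IsDeBruijn (p+1) (db (p+1)) ∧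
    (∀ j ≤ p, (db (p+1)).getD j false = false) ∧
    ∀ j ≤ p, (db (p+1)).getD (2^(p+1)-1-j) false = true := by
  obtain ⟨G, h0, hs⟩ := exists_greedy p
  obtain ⟨hT1, hinj, hall⟩ := greedy_full p G h0 hs
  have hz := greedy_zero p G h0 hs
  have hp : p + 1 < 2^(p+1) := Nat.lt_two_pow_self
  obtain ⟨T, hT⟩ : ∃ T, T = 2^(p+1) := ⟨_, rfl⟩
  rw [← hT] at hT1 hinj hall hp
  obtain ⟨x, hxd⟩ : ∃ x, x = (List.range T).map (fun k => G (k+(p+1))) := ⟨_, rfl⟩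
  have hxl : x.length = T := by simp [hxd]
  have hxg : ∀ k < T, x.getD k false = G (k+(p+1)) := by
    intro k hk
    rw [List.getD_eq_getElem _ _ (by omega)]
    simp [hxd]
  have hF : ∀ a < T+p+1, x.getD ((a + (T-(p+1))) % T) false = G a := by
    intro a ha
    by_cases h : p + 1 ≤ a
    · rw [show a + (T-(p+1)) = (a-(p+1)) + T by omega, Nat.add_mod_right, Nat.mod_eq_of_lt (by omega),
        hxg _ (by omega)]
      congr 1; omega
    · rw [Nat.mod_eq_of_lt (by omega), hxg _ (by omega), show a + (T-(p+1)) + (p+1) = T + a by omega,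
        hT1 a (by omega), h0 a (by omega)]
  have hwin : ∀ i i0, i0 < T → (i0 = i+p+1 ∨ i0+T = i+p+1) → ∀ j < p+1, x.getD ((i+j)%T) false = G (i0+j) := by
    intro i i0 hi0 h j hj
    rw [← hF (i0+j) (by omega)]
    congr 1
    rcases h with h | h
    · rw [show i0 + j + (T-(p+1)) = i + j + T by omega, Nat.add_mod_right]
    · rw [show i0 + j + (T-(p+1)) = i + j by omega]
  have hxdb : IsDeBruijn (p+1) x := by
    rw [isDB_iff, ← hT]
    refine ⟨hxl, fun w => ?_⟩
    obtain ⟨i0, hi0, hw⟩ := hall w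
    have hi : ∃ i < T, (i0 = i+p+1 ∨ i0+T = i+p+1) := by
      by_cases h : p+1 ≤ i0
      · exact ⟨i0-(p+1), by omega, by omega⟩
      · exact ⟨i0+T-(p+1), by omega, by omega⟩
    obtain ⟨i, hi, hrel⟩ := hi
    refine ⟨i, ⟨hi, fun j hj => by rw [hwin i i0 hi0 hrel j hj, hw j hj]⟩, ?_⟩
    rintro i' ⟨hi', hw'⟩
    have hi2 : ∃ i1 < T, (i1 = i'+p+1 ∨ i1+T = i'+p+1) := by
      by_cases h : i'+p+1 < T
      · exact ⟨i'+p+1, by omega, by omega⟩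
      · exact ⟨i'+p+1-T, by omega, by omega⟩
    obtain ⟨i1, hi1, hrel1⟩ := hi2
    have := hinj i1 hi1 i0 hi0 (fun j hj => by
      rw [← hwin i' i1 hi1 hrel1 j hj, hw' j hj, hw j hj])
    omega
  have hmin : ∀ y, IsDeBruijn (p+1) y → x ≤ y := by
    intro y hy
    rw [isDB_iff, ← hT] at hy
    obtain ⟨hyl, hyw⟩ := hy
    rw [← not_lt]
    intro hlt
    rcases List.lt_iff_exists.1 hlt with ⟨_, h⟩ | ⟨k, hk1, hk2, hag, hk⟩
    · omega
    have hyk : y[k] = false ∧ x[k] = true := by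
      revert hk
      cases y[k] <;> cases x[k] <;> simp
    have hlow : ∀ i, (hi : i < T) → y.getD (i % T) false = y[i] := by
      intro i hi
      rw [Nat.mod_eq_of_lt hi, List.getD_eq_getElem _ _ (by omega)]
    refine greedy_least p G h0 hs hz T hinj (fun i => y.getD (i % T) false) ?_ k (by omega) ?_ ?_ ?_
    · intro a ha b hb h
      exact (hyw (fun j => y.getD ((b+j) % T) false)).unique ⟨ha, h⟩ ⟨hb, fun _ _ => rfl⟩
    · intro i hi
      rw [hlow i (by omega), hag i hi, ← hxg i (by omega), List.getD_eq_getElem _ _ (by omega)]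
    · rw [hlow k (by omega), hyk.1]
    · rw [← hxg k (by omega), List.getD_eq_getElem _ _ (by omega), hyk.2]
  have hex : ∃ x : List Bool, IsDeBruijn (p+1) x ∧ ∀ y, IsDeBruijn (p+1) y → x ≤ y := ⟨x, hxdb, hmin⟩
  have hdb : db (p+1) = x := by
    have e : db (p+1) = hex.choose := by
      unfold db; rw [dif_pos hex]
    rw [e]
    exact le_antisymm (hex.choose_spec.2 x hxdb) (hmin _ hex.choose_spec.1)
  rw [hdb]
  refine ⟨hxdb, ?_, ?_⟩
  · intro j hj
    rw [hxg j (by omega), add_comm, hz j hj]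
  · intro j hj
    rw [← hT, hxg _ (by omega), show T - 1 - j + (p+1) = T + (p - j) by omega, hT1 _ (by omega)]

theorem db_form (p : ℕ) : (db (p+1)).length = 2^(p+1) ∧ ∃ z, db (p+1) = List.replicate (p+1) false ++ z ∧
    (∃ z', z = true :: z') ∧ (1 ≤ p → ∃ z'', z = z'' ++ [true, true]) ∧
    ∀ q, p ≤ q → ¬ (true :: (List.replicate q false ++ [true])) <:+: z := by
  obtain ⟨h1, h2, h3⟩ := db_spec_s7 p
  rw [isDB_iff] at h1
  obtain ⟨hl, hw⟩ := h1
  have hp : p + 1 < 2^(p+1) := Nat.lt_two_pow_self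
  generalize db (p+1) = x at h2 h3 hl hw ⊢
  have hinj : ∀ a < 2^(p+1), ∀ b < 2^(p+1), a + p < 2^(p+1) → b + p < 2^(p+1) →
      (∀ j < p+1, x.getD (a+j) false = x.getD (b+j) false) → a = b := by
    intro a ha b hb ha2 hb2 h
    refine (hw (fun j => x.getD (b+j) false)).unique ⟨ha, fun j hj => ?_⟩ ⟨hb, fun j hj => ?_⟩
    · rw [Nat.mod_eq_of_lt (by omega), h j hj]
    · rw [Nat.mod_eq_of_lt (by omega)]
  have hxm : x.getD (p+1) false = true := by
    by_contra hc
    have hc : x.getD (p+1) false = false := by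
      revert hc; cases x.getD (p+1) false <;> simp
    have := hinj 0 (by omega) 1 (by omega) (by omega) (by omega) (by
      intro j hj
      rw [h2 _ (by omega)]
      by_cases hjp : j = p
      · rw [hjp, add_comm 1 p, hc]
      · rw [h2 _ (by omega)])
    omega
  have hxs : x = List.replicate (p+1) false ++ x.drop (p+1) := by
    conv_lhs => rw [← List.take_append_drop (p+1) x]
    congr 1
    apply List.ext_getElem
    · simp [hl]; omega
    · intro j hj1 hj2
      have hj : j < p+1 := by simpa using hj2
      have := h2 j (by omega)
      rw [List.getD_eq_getElem _ _ (by omega)] at this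
      simpa using this
  refine ⟨hl, x.drop (p+1), hxs, ?_, ?_, ?_⟩
  · rw [List.drop_eq_getElem_cons (by omega)]
    rw [List.getD_eq_getElem _ _ (by omega)] at hxm
    exact ⟨_, by rw [hxm]⟩
  · intro hp1
    have hp2 : p + 1 + 2 ≤ 2^(p+1) := by
      have : p < 2^p := Nat.lt_two_pow_self
      rw [pow_succ]; omega
    have e1 := h3 0 (by omega)
    have e2 := h3 1 (by omega)
    rw [List.getD_eq_getElem _ _ (by omega)] at e1 e2
    refine ⟨(x.drop (p+1)).take (2^(p+1) - (p+1) - 2), ?_⟩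
    conv_lhs => rw [← List.take_append_drop (2^(p+1) - (p+1) - 2) (x.drop (p+1))]
    congr 1
    rw [List.drop_drop, show p + 1 + (2^(p+1) - (p+1) - 2) = 2^(p+1)-1-1 by omega,
      List.drop_eq_getElem_cons (by omega), e2,
      show 2^(p+1)-1-1+1 = 2^(p+1)-1-0 by omega, List.drop_eq_getElem_cons (by omega), e1]
    simp [hl]
    omega
  · rintro q hq ⟨s, t, hst⟩
    obtain ⟨A, hA⟩ : ∃ A, A = List.replicate (p+1) false ++ s ++ [true] := ⟨_, rfl⟩
    have hAl : A.length = p + 1 + s.length + 1 := by simp [hA]; ring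
    have hxA : x = A ++ (List.replicate q false ++ (true :: t)) := by
      rw [hxs, ← hst, hA]; simp
    have hlen : A.length + q + 1 + t.length = 2^(p+1) := by
      rw [← hl, hxA]; simp; ring
    have g1 : ∀ l < q, x.getD (A.length + l) false = false := by
      intro l hlq
      rw [hxA, List.getD_append_right _ _ _ _ (by omega), Nat.add_sub_cancel_left,
        List.getD_append _ _ _ _ (by simpa)]
      simp [hlq]
    have g2 : x.getD (A.length + q) false = true := by
      rw [hxA, List.getD_append_right _ _ _ _ (by omega), Nat.add_sub_cancel_left,
        List.getD_append_right _ _ _ _ (by simp)]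
      simp
    rcases Nat.lt_or_eq_of_le hq with h | h
    · have := hinj 0 (by omega) A.length (by omega) (by omega) (by omega) (fun j hj => by
        rw [h2 _ (by omega), g1 _ (by omega)])
      omega
    · subst h
      have := hinj 1 (by omega) A.length (by omega) (by omega) (by omega) (fun j hj => by
        by_cases hjp : j = p
        · rw [hjp, g2, add_comm 1 p, hxm]
        · rw [h2 _ (by omega), g1 _ (by omega)])
      omega

/-- Concatenations of runs of zeros and words that start with 1, end with 11 and avoid `1 0^q 1`. -/
inductive Cat (q : ℕ) : List Bool → Prop
  | base (a : ℕ) : Cat q (List.replicate a false)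
  | step (a : ℕ) (z' z'' L : List Bool) (h : true :: z' = z'' ++ [true, true])
      (hz : ¬ (true :: (List.replicate q false ++ [true])) <:+: (true :: z')) (hL : Cat q L) :
      Cat q (List.replicate a false ++ (true :: z') ++ L)

theorem Cat.append {q : ℕ} {L1 L2 : List Bool} (h1 : Cat q L1) (h2 : Cat q L2) : Cat q (L1 ++ L2) := by
  induction h1 with
  | base a =>
    cases h2 with
    | base b => rw [List.replicate_append_replicate]; exact Cat.base _
    | step b z' z'' L h hz hL =>
      rw [← List.append_assoc, ← List.append_assoc, List.replicate_append_replicate]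
      exact Cat.step _ z' z'' L h hz hL
  | step a z' z'' L h hz hL ih =>
    rw [List.append_assoc]
    exact Cat.step a z' z'' _ h hz ih

theorem Cat.flatten {q : ℕ} (Ls : List (List Bool)) (h : ∀ L ∈ Ls, Cat q L) : Cat q Ls.flatten := by
  induction Ls with
  | nil => exact Cat.base 0
  | cons L Ls ih =>
    rw [List.flatten_cons]
    exact (h L (by simp)).append (ih (fun L' h' => h L' (by simp [h'])))

theorem zeros_avoid (q a : ℕ) (z' : List Bool)
    (hz : ¬ (true :: (List.replicate q false ++ [true])) <:+: (true :: z')) :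
    ¬ (false :: true :: (List.replicate q false ++ [true])) <:+: (List.replicate a false ++ (true :: z')) := by
  induction a with
  | zero =>
    intro h
    exact hz ((List.infix_cons (List.infix_refl _)).trans h)
  | succ a ih =>
    intro h
    rw [List.replicate_succ, List.cons_append, List.infix_cons_iff] at h
    rcases h with h | h
    · rw [List.cons_prefix_cons] at h
      rcases a with _ | a
      · exact hz h.2.isInfix
      · rw [List.replicate_succ, List.cons_append, List.cons_prefix_cons] at h
        exact absurd h.2.1 (by simp)
    · exact ih h

theorem Cat.avoid {q : ℕ} {L : List Bool} (hL : Cat q L) :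
    ¬ (false :: true :: (List.replicate q false ++ [true])) <:+: L := by
  induction hL with
  | base a =>
    intro h
    have : true ∈ List.replicate a false := h.subset (by simp)
    simp at this
  | step a z' z'' L h hz hL ih =>
    intro hinf
    rw [List.infix_append_iff] at hinf
    rcases hinf with h1 | h1 | ⟨l1, l2, he, h1, h2⟩
    · exact zeros_avoid q a z' hz h1
    · exact ih h1
    · rw [h] at h1
      obtain ⟨s, hs⟩ := h1
      rcases List.eq_nil_or_concat l2 with rfl | ⟨l2', c, rfl⟩
      · apply zeros_avoid q a z' hz
        rw [h, ← hs, he]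
        exact ⟨s, [], by simp⟩
      rcases l1 with _ | ⟨b, l1⟩
      · exact ih (by rw [he]; exact h2.isInfix)
      rcases l1 with _ | ⟨b2, l1⟩
      · have hb : b = false := by
          simp only [List.cons_append, List.cons.injEq] at he
          exact he.1.symm
        subst hb
        have hs' : s ++ [false] = (List.replicate a false ++ z'' ++ [true]) ++ [true] := by
          rw [hs]; simp
        have := List.append_inj' hs' rfl
        simp at this
      simp only [List.cons_append, List.cons.injEq] at he
      obtain ⟨hb, hb2, he⟩ := he
      subst hb hb2
      rw [List.concat_eq_append, ← List.append_assoc] at he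
      have he' := (List.append_inj' he rfl).1
      rcases List.eq_nil_or_concat l1 with rfl | ⟨l1', d, rfl⟩
      · have hs' : s ++ [false, true] = (List.replicate a false ++ z'') ++ [true, true] := by
          rw [hs]; simp
        have := List.append_inj' hs' rfl
        simp at this
      · have hd : d = false := by
          have : d ∈ List.replicate q false := by rw [he']; simp
          exact List.eq_of_mem_replicate this
        subst hd
        have hs' : (s ++ false :: true :: l1') ++ [false] = (List.replicate a false ++ z'' ++ [true]) ++ [true] := by
          rw [List.append_assoc, List.append_assoc]
          simpa using hs
        have := List.append_inj' hs' rfl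
        simp at this

theorem Sblk_cat (p q : ℕ) (hp : 1 ≤ p) (hpq : p ≤ q) : Cat q (Sblk (p+1)) := by
  obtain ⟨hl, z, hz, ⟨z', hz'⟩, hz2, hav⟩ := db_form p
  obtain ⟨z'', hz''⟩ := hz2 hp
  unfold Sblk
  apply Cat.flatten
  intro L hL
  rw [List.mem_map] at hL
  obtain ⟨i, hi, rfl⟩ := hL
  rw [List.mem_range] at hi
  have hi2 : i < p + 1 := lt_of_lt_of_le hi (Nat.ordProj_le 2 (by omega))
  unfold Bblk
  apply Cat.flatten
  intro L hL
  have hL := List.eq_of_mem_replicate hL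
  have hrot : L = List.replicate (p+1-i) false ++ (true :: z') ++ List.replicate i false := by
    have hlt : p + 1 < 2^(p+1) := Nat.lt_two_pow_self
    rw [hL, List.rotate_eq_drop_append_take (by omega), hz, ← hz',
      List.drop_append_of_le_length (by simp; omega), List.take_append_of_le_length (by simp; omega)]
    simp
    omega
  rw [hrot]
  exact Cat.step _ z' z'' _ (by rw [← hz', hz'']) (by rw [← hz']; exact hav q hpq) (Cat.base i)

theorem Sblk_one : Sblk 1 = [false, true] := by
  obtain ⟨hl, z, hz, ⟨z', hz'⟩, -, -⟩ := db_form 0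
  have h : db 1 = [false, true] := by
    subst hz'
    simp only [zero_add] at hz hl
    rw [hz] at hl ⊢
    simpa using hl
  simp [Sblk, Bblk, oddPart, h]

theorem Sblk_two : ∃ r, Sblk 2 = false :: false :: true :: r := by
  obtain ⟨hl, z, hz, ⟨z', hz'⟩, -, -⟩ := db_form 1
  have h : db 2 = false :: false :: true :: z' := by
    subst hz'
    simpa [List.replicate_succ] using hz
  have hf : Nat.factorization 2 2 = 1 := Nat.Prime.factorization_self Nat.prime_two
  have ho : oddPart 2 = 1 := by simp [oddPart, hf]
  refine ⟨z' ++ Bblk 2 1 1, ?_⟩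
  unfold Sblk
  rw [hf, ho]
  simp [List.range_succ, Bblk, h]

/-- For all sufficiently large `n`, the string `0·1·0^{n-2}·1` does not occur as a
substring of `S_1 S_2 ⋯ S_{n-1}`. -/
theorem stmt7 :
    ∃ N : ℕ, ∀ n, N ≤ n →
      ¬ ([false, true] ++ List.replicate (n - 2) false ++ [true]) <:+: Sfin (n - 1) := by
  refine ⟨5, fun n hn => ?_⟩
  obtain ⟨k, rfl⟩ : ∃ k, n = k + 5 := ⟨n - 5, by omega⟩
  rw [show k + 5 - 2 = k + 3 by omega, show k + 5 - 1 = k + 3 + 1 by omega]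
  obtain ⟨Y, hY⟩ : ∃ Y, Y = ((List.range (k+3)).map (fun j => Sblk (j+1+1))).flatten := ⟨_, rfl⟩
  have hS : Sfin (k+3+1) = false :: true :: Y := by
    unfold Sfin
    rw [List.range_succ_eq_map, List.map_cons, List.flatten_cons, zero_add, Sblk_one, hY, List.map_map]
    rfl
  have hcat : Cat (k+3) Y := by
    rw [hY]
    apply Cat.flatten
    intro L hL
    rw [List.mem_map] at hL
    obtain ⟨i, hi, rfl⟩ := hL
    rw [List.mem_range] at hi
    exact Sblk_cat (i+1) (k+3) (by omega) (by omega)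
  have hstart : ∃ r, Y = false :: false :: true :: r := by
    obtain ⟨r, hr⟩ := Sblk_two
    rw [hY, List.range_succ_eq_map, List.map_cons, List.flatten_cons, zero_add, hr]
    exact ⟨_, rfl⟩
  rw [hS]
  intro h
  have h : (false :: true :: (List.replicate (k+3) false ++ [true])) <:+: false :: true :: Y := by
    simpa using h
  rw [List.infix_cons_iff] at h
  rcases h with h | h
  · obtain ⟨r, hr⟩ := hstart
    rw [hr] at h
    simp [List.replicate_succ, List.cons_prefix_cons] at h
  · rw [List.infix_cons_iff] at h
    rcases h with h | h
    · simp [List.cons_prefix_cons] at h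
    · exact hcat.avoid h
end
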